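/- Let N be a continuous nest on a separable infinite-dimensional complex Hilbert space, let O be a stable net of families of intervals of N, and let I be the kernel of O. Then for every X ∈ Alg N the quotient norm is given by dist(X, I) = lim_{P∈O} sup_{E∈P} ‖EXE‖_e. -/

import Mathlib

open Set Filter Topology

noncomputable def essNorm {H : Type*} [NormedAddCommGroup H] [InnerProductSpace ℂ H]
    [CompleteSpace H] (T : H →L[ℂ] H) : ℝ :=
  Metric.infDist T {K : H →L[ℂ] H | IsCompactOperator ⇑K}

/-- A continuous nest on `H`, parameterized by `[0,1]`: an increasing family of orthogonal
projections `N t` whose ranges strictly increase, with `N 0 = 0`, `N 1 = 1`, and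
`t ↦ N t ξ` norm-continuous on `[0,1]` for every `ξ`. -/
structure ContinuousNest (H : Type*) [NormedAddCommGroup H] [InnerProductSpace ℂ H]
    [CompleteSpace H] where
  N : ℝ → H →L[ℂ] H
  idem : ∀ t ∈ Icc (0 : ℝ) 1, IsIdempotentElem (N t)
  selfAdjoint : ∀ t ∈ Icc (0 : ℝ) 1, IsSelfAdjoint (N t)
  range_lt : ∀ s t : ℝ, s ∈ Icc (0 : ℝ) 1 → t ∈ Icc (0 : ℝ) 1 → s < t →
    LinearMap.range (N s).toLinearMap < LinearMap.range (N t).toLinearMap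
  N_zero : N 0 = 0
  N_one : N 1 = 1
  contOn : ∀ ξ : H, ContinuousOn (fun t => N t ξ) (Icc (0 : ℝ) 1)

variable {H : Type*} [NormedAddCommGroup H] [InnerProductSpace ℂ H] [CompleteSpace H]

/-- `P₁` refines `P₂`: every interval of `P₁` is dominated by an interval of `P₂`
(in the Loewner order). -/
def OpRefines (P₁ P₂ : Set (H →L[ℂ] H)) : Prop :=
  ∀ E ∈ P₁, ∃ F ∈ P₂, ContinuousLinearMap.IsPositive (F - E)

namespace ContinuousNest

variable (𝒩 : ContinuousNest H)

/-- The nest algebra of `𝒩`. -/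
def alg : Set (H →L[ℂ] H) := {T | ∀ t ∈ Icc (0 : ℝ) 1, (1 - 𝒩.N t) * T * 𝒩.N t = 0}

/-- An interval of the nest: a difference `N t - N s` with `0 ≤ s ≤ t ≤ 1`. -/
def IsInterval (E : H →L[ℂ] H) : Prop :=
  ∃ s t : ℝ, 0 ≤ s ∧ s ≤ t ∧ t ≤ 1 ∧ E = 𝒩.N t - 𝒩.N s

def IsIntervalFamily (P : Set (H →L[ℂ] H)) : Prop := ∀ E ∈ P, 𝒩.IsInterval E

/-- A net of families of intervals: directed under refinement. -/
def IsNet (O : Set (Set (H →L[ℂ] H))) : Prop :=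
  (∀ P ∈ O, 𝒩.IsIntervalFamily P) ∧
  ∀ P ∈ O, ∀ Q ∈ O, ∃ R ∈ O, OpRefines R P ∧ OpRefines R Q

def nestSet : Set (H →L[ℂ] H) := 𝒩.N '' Icc (0 : ℝ) 1

/-- An order automorphism of the nest: an order-preserving bijection of `{N t : t ∈ [0,1]}`
onto itself. -/
def IsAuto (θ : (H →L[ℂ] H) → H →L[ℂ] H) : Prop :=
  Set.BijOn θ 𝒩.nestSet 𝒩.nestSet ∧
  ∀ s t : ℝ, s ∈ Icc (0 : ℝ) 1 → t ∈ Icc (0 : ℝ) 1 → s ≤ t →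
    ContinuousLinearMap.IsPositive (θ (𝒩.N t) - θ (𝒩.N s))

/-- The image family `θ(P) = {θ(N t) - θ(N s) : N t - N s ∈ P}`. -/
def autoImage (θ : (H →L[ℂ] H) → H →L[ℂ] H) (P : Set (H →L[ℂ] H)) : Set (H →L[ℂ] H) :=
  {E | ∃ s t : ℝ, 0 ≤ s ∧ s ≤ t ∧ t ≤ 1 ∧ 𝒩.N t - 𝒩.N s ∈ P ∧ E = θ (𝒩.N t) - θ (𝒩.N s)}

/-- A stable net of intervals. -/
def IsStableNet (O : Set (Set (H →L[ℂ] H))) : Prop :=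
  𝒩.IsNet O ∧ ∀ θ, 𝒩.IsAuto θ → ∀ P ∈ O, 𝒩.autoImage θ P ∈ O

/-- The kernel of a net `O`: those `X` in the nest algebra with
`lim_{P ∈ O} sup_{E ∈ P} ‖EXE‖ₑ = 0`; since the sup decreases under refinement, this limit
is `0` iff for every `ε > 0` some `P ∈ O` has all `‖EXE‖ₑ < ε`. -/
def kernel (O : Set (Set (H →L[ℂ] H))) : Set (H →L[ℂ] H) :=
  {X | X ∈ 𝒩.alg ∧ ∀ ε : ℝ, 0 < ε → ∃ P ∈ O, ∀ E ∈ P, essNorm (E * X * E) < ε}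

/-- A two-sided ideal of the nest algebra. -/
def IsIdeal (I : Set (H →L[ℂ] H)) : Prop :=
  I ⊆ 𝒩.alg ∧ (0 : H →L[ℂ] H) ∈ I ∧
  (∀ X ∈ I, ∀ Y ∈ I, X + Y ∈ I) ∧ (∀ X ∈ I, -X ∈ I) ∧
  ∀ A ∈ 𝒩.alg, ∀ X ∈ I, A * X ∈ I ∧ X * A ∈ I

/-- A stable ideal: a norm-closed two-sided ideal invariant under every automorphism
`T ↦ S T S⁻¹` of the nest algebra implemented by an invertible `S ∈ B(H)`. -/
def IsStableIdeal (I : Set (H →L[ℂ] H)) : Prop :=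
  𝒩.IsIdeal I ∧ IsClosed I ∧
  ∀ S : (H →L[ℂ] H)ˣ,
    (fun T => (↑S : H →L[ℂ] H) * T * (↑S⁻¹ : H →L[ℂ] H)) '' 𝒩.alg = 𝒩.alg →
    (fun T => (↑S : H →L[ℂ] H) * T * (↑S⁻¹ : H →L[ℂ] H)) '' I = I

end ContinuousNest

/-!
Compressions do not increase the essential norm, and those of a kernel element to the intervals of
a fine enough family are essentially small; hence the distance is at least the limit.

For the converse let `‖E X E‖ₑ < r` for all `E ∈ P`. For `X` in the nest algebra the compression
to `N t - N s` is the corner `(1 - N s) X N t`. Multiplying `X` by `1 - G` with `G` a compact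
element of the algebra makes finitely many of these corners smaller than `r` in norm, and
Parrott's lemma then fills them up to an operator of norm less than `r` in the nest algebra which
agrees with `X` on them modulo the compacts. To treat countably many corners, approximants `Y n`
for the first `n` corners are glued into a sequence `Z (n + 1) = Z n * g + Y (n + 1) * (1 - g)`
that converges strongly, and whose corners converge in norm. The gluing costs little norm because
the nest algebra has compact approximate units `G m` for which the column `(G m, 1 - G m)` has
norm close to `1`, namely `V (V + δ)⁻¹` where `V` is a triangular truncation of a finite rank
operator, hence almost accretive; `g` is an average of such operators, with a telescoping error.

Stability of the net reduces all the intervals to countably many. Two order isomorphisms of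
`[0, 1]` can be chosen so that an interval lying under `P` and under its two images always lies
under one of a fixed countable set of intervals subordinate to `P`. So if `W` has norm at most
`r + ε` and its corners for this countable set agree with those of `X` modulo the compacts, then
`X - W` is in the kernel.
-/

/-! ### Iterates of a monotone map on a linear order -/

section MutuallyReachable

variable {α : Type*} [LinearOrder α] {g : α → α} {b x y z : α}

/-- Two points are mutually reachable under an inflationary map `g` if finitely many iterations
of `g` carry each of them beyond the other. -/
def MutuallyReachable (g : α → α) (x y : α) : Prop := ∃ n : ℕ, x ≤ g^[n] y ∧ y ≤ g^[n] x

/-- The least number of iterations of `g` carrying `x` beyond `y` (`0` if there is none). -/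
noncomputable def steps (g : α → α) (x y : α) : ℕ := sInf {n | y ≤ g^[n] x}

/-- The signed number of iterations of `g` separating `x` from the base point `b`; it increases
by `1` along generic orbits of `g`. -/
noncomputable def phase (g : α → α) (b x : α) : ℤ :=
  if x ≤ b then -(steps g x b : ℤ) else steps g b x - 1

theorem MutuallyReachable.symm : MutuallyReachable g x y → MutuallyReachable g y x :=
  fun ⟨n, hxy, hyx⟩ => ⟨n, hyx, hxy⟩

theorem MutuallyReachable.trans (hg : Monotone g) (hxy : MutuallyReachable g x y)
    (hyz : MutuallyReachable g y z) : MutuallyReachable g x z := by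
  obtain ⟨n, hx, hy⟩ := hxy
  obtain ⟨m, hy', hz⟩ := hyz
  refine ⟨n + m, ?_, ?_⟩
  · rw [Function.iterate_add_apply]
    exact hx.trans (hg.iterate n hy')
  · rw [add_comm, Function.iterate_add_apply]
    exact hz.trans (hg.iterate m hy)

theorem MutuallyReachable.of_le_of_le (hle : ∀ x, x ≤ g x) (hxz : MutuallyReachable g x z)
    (hxy : x ≤ y) (hyz : y ≤ z) : MutuallyReachable g x y :=
  let ⟨n, _, hzx⟩ := hxz
  ⟨n, hxy.trans (Function.id_le_iterate_of_id_le hle n y), hyz.trans hzx⟩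

theorem mutuallyReachable_apply (hle : ∀ x, x ≤ g x) (x : α) : MutuallyReachable g x (g x) :=
  ⟨1, (hle x).trans (hle (g x)), le_rfl⟩

theorem steps_le {n : ℕ} (h : y ≤ g^[n] x) : steps g x y ≤ n := Nat.sInf_le h

theorem le_iterate_steps (h : MutuallyReachable g x y) : y ≤ g^[steps g x y] x :=
  Nat.sInf_mem (s := {n | y ≤ g^[n] x}) (let ⟨n, _, hn⟩ := h; ⟨n, hn⟩)

theorem steps_mono_right (hxz : MutuallyReachable g x z) (hyz : y ≤ z) :
    steps g x y ≤ steps g x z :=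
  steps_le (hyz.trans (le_iterate_steps hxz))

theorem steps_anti_left (hg : Monotone g) (hxz : MutuallyReachable g x z) (hxy : x ≤ y) :
    steps g y z ≤ steps g x z :=
  steps_le ((le_iterate_steps hxz).trans (hg.iterate _ hxy))

theorem steps_pos (hxy : x < y) (h : MutuallyReachable g x y) : 0 < steps g x y := by
  by_contra! h0
  have := le_iterate_steps h
  rw [Nat.le_zero.1 h0] at this
  exact this.not_gt hxy

theorem phase_mono (hg : Monotone g) (hx : MutuallyReachable g x b)
    (hy : MutuallyReachable g y b) (hxy : x ≤ y) : phase g b x ≤ phase g b y := by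
  unfold phase
  split_ifs with hxb hyb hyb
  · have := steps_anti_left hg hx hxy
    lia
  · have := steps_pos (not_le.1 hyb) hy.symm
    lia
  · exact absurd (hxy.trans hyb) hxb
  · have := steps_mono_right hy.symm hxy
    lia

theorem ordConnected_phase_fiber (hg : Monotone g) (hle : ∀ x, x ≤ g x) (b : α) (k : ℤ) :
    {x | MutuallyReachable g x b ∧ phase g b x = k}.OrdConnected := by
  refine ⟨fun x hx z hz y hy => ?_⟩
  have hxy : MutuallyReachable g x y :=
    (hx.1.trans hg hz.1.symm).of_le_of_le hle hy.1 hy.2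
  have hyb := hxy.symm.trans hg hx.1
  exact ⟨hyb, (hz.2 ▸ phase_mono hg hyb hz.1 hy.2).antisymm
    (hx.2 ▸ phase_mono hg hx.1 hyb hy.1)⟩

theorem steps_eq_steps_apply_add_one (hxb : x < b) (h : MutuallyReachable g x b)
    (h' : MutuallyReachable g (g x) b) : steps g x b = steps g (g x) b + 1 := by
  refine le_antisymm (steps_le ?_) ?_
  · rw [Function.iterate_succ_apply]
    exact le_iterate_steps h'
  · obtain ⟨j, hj⟩ := Nat.exists_eq_succ_of_ne_zero (steps_pos hxb h).ne'
    have hbj := le_iterate_steps h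
    rw [hj, Function.iterate_succ_apply] at hbj
    have := steps_le hbj
    lia

theorem steps_apply_right (hg : Monotone g) (hle : ∀ x, x ≤ g x) (hbx : b < x)
    (h : MutuallyReachable g b x) (hgx : ∀ n, g x ≠ g^[n] b) :
    steps g b (g x) = steps g b x + 1 := by
  have h' : MutuallyReachable g b (g x) := h.trans hg (mutuallyReachable_apply hle x)
  refine le_antisymm (steps_le ?_) ?_
  · rw [Function.iterate_succ_apply']
    exact hg (le_iterate_steps h)
  · by_contra! hlt
    obtain ⟨j, hj⟩ :=
      Nat.exists_eq_succ_of_ne_zero (steps_pos (hbx.trans_le (hle x)) h').ne'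
    have hjx : g^[j] b < x := by
      by_contra! hxj
      have := steps_le hxj
      lia
    have hgxj : g x ≤ g^[j + 1] b := by
      rw [← Nat.succ_eq_add_one, ← hj]
      exact le_iterate_steps h'
    refine hgx (j + 1) (hgxj.antisymm ?_)
    rw [Function.iterate_succ_apply']
    exact hg hjx.le

theorem phase_apply (hg : Monotone g) (hle : ∀ x, x ≤ g x) (hx : MutuallyReachable g x b)
    (hxb : x ≠ b) (hgx : ∀ n, g x ≠ g^[n] b) : phase g b (g x) = phase g b x + 1 := by
  have hx' : MutuallyReachable g (g x) b := (mutuallyReachable_apply hle x).symm.trans hg hx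
  rcases hxb.lt_or_gt with hlt | hgt
  · rcases (hgx 0).lt_or_gt with hlt' | hgt'
    · have := steps_eq_steps_apply_add_one hlt hx hx'
      rw [phase, phase, if_pos hlt.le, if_pos (show g x ≤ b from hlt'.le)]
      lia
    · have hgt' : b < g x := hgt'
      have h₁ : steps g x b = 1 := le_antisymm (steps_le hgt'.le) (steps_pos hlt hx)
      have h₂ : steps g b (g x) = 1 :=
        le_antisymm (steps_le (hg hlt.le)) (steps_pos hgt' hx'.symm)
      rw [phase, phase, if_pos hlt.le, if_neg hgt'.not_ge, h₁, h₂]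
      rfl
  · have := steps_apply_right hg hle hgt hx.symm hgx
    rw [phase, phase, if_neg hgt.not_ge, if_neg (hgt.trans_le (hle x)).not_ge]
    lia

/-- A base point of the `g`-class of `x` in the set `Q`; it is meaningful only if the class
meets `Q`. -/
noncomputable def basePoint (g : α → α) (Q : Set α) (x : α) : α :=
  haveI : Nonempty α := ⟨x⟩
  Classical.epsilon fun b => b ∈ Q ∧ MutuallyReachable g x b

theorem basePoint_spec {Q : Set α} {q : α} (hq : q ∈ Q)
    (hxq : MutuallyReachable g x q) :
    basePoint g Q x ∈ Q ∧ MutuallyReachable g x (basePoint g Q x) :=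
  haveI : Nonempty α := ⟨x⟩
  Classical.epsilon_spec (p := fun b => b ∈ Q ∧ MutuallyReachable g x b) ⟨q, hq, hxq⟩

theorem MutuallyReachable.basePoint_eq (hg : Monotone g) (Q : Set α)
    (hxy : MutuallyReachable g x y) : basePoint g Q x = basePoint g Q y := by
  have : (fun b => b ∈ Q ∧ MutuallyReachable g x b) =
      fun b => b ∈ Q ∧ MutuallyReachable g y b :=
    funext fun b => propext <| and_congr_right fun _ =>
      ⟨hxy.symm.trans hg, hxy.trans hg⟩
  simp only [basePoint, this]

end MutuallyReachable

section Alternating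

variable {α : Type*} [LinearOrder α] [TopologicalSpace α] [OrderClosedTopology α]

theorem countable_diff_interior_of_ordConnected {s : Set α} (hs : s.OrdConnected) :
    (s \ interior s).Countable := by
  have hleast : {x | IsLeast s x}.Subsingleton := fun _ hx _ hy => hx.unique hy
  have hgreatest : {x | IsGreatest s x}.Subsingleton := fun _ hx _ hy => hx.unique hy
  refine (hleast.countable.union hgreatest.countable).mono fun x ⟨hxs, hxi⟩ => ?_
  by_contra hx
  simp only [mem_union, mem_ofPred_eq, not_or, IsLeast, IsGreatest, hxs, true_and,
    mem_lowerBounds, mem_upperBounds, not_forall, not_le] at hx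
  obtain ⟨⟨a, ha, hax⟩, c, hc, hxc⟩ := hx
  exact hxi (interior_maximal (Ioo_subset_Icc_self.trans (hs.out ha hc)) isOpen_Ioo ⟨hax, hxc⟩)

/-- The set `R` is the set of points of even phase: off a countable set the phase is locally
constant and `g` increases it by `1`. -/
theorem exists_alternating_set [DenselyOrdered α] [TopologicalSpace.SeparableSpace α]
    {g : α → α} (hg : Monotone g) (hle : ∀ x, x ≤ g x) :
    ∃ R C : Set α, C.Countable ∧ ∀ x, x < g x → x ∉ C → g x ∉ C →
      x ∈ interior R ∧ g x ∉ R ∨ x ∈ interior Rᶜ ∧ g x ∈ R := by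
  obtain ⟨Q, hQc, hQ⟩ := TopologicalSpace.exists_countable_dense α
  set β : α → α := basePoint g Q
  set F : α → ℤ → Set α := fun b k => {y | MutuallyReachable g y b ∧ phase g b y = k}
  set R : Set α := {x | Even (phase g (β x) x)}
  refine ⟨R, (⋃ q ∈ Q, range fun n : ℕ => g^[n] q) ∪ ⋃ q ∈ Q, ⋃ k, F q k \ interior (F q k),
    (hQc.biUnion fun q _ => countable_range _).union (hQc.biUnion fun q _ =>
      countable_iUnion fun k => countable_diff_interior_of_ordConnected
        (ordConnected_phase_fiber hg hle q k)),
    fun x hx hxC hgxC => ?_⟩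
  simp only [mem_union, mem_iUnion, mem_range, not_or, not_exists, Set.mem_sdiff, not_and,
    not_not] at hxC hgxC
  obtain ⟨q, hqQ, hxq, hqx⟩ := hQ.exists_between hx
  obtain ⟨hβQ, hxβ⟩ := basePoint_spec hqQ
    ((mutuallyReachable_apply hle x).of_le_of_le hle hxq.le hqx.le)
  have hβF : ∀ y ∈ F (β x) (phase g (β x) x), phase g (β y) y = phase g (β x) x :=
    fun y hy => by
      rw [← hy.2, show β y = β x from (hy.1.trans hg hxβ.symm).basePoint_eq hg Q]
  have hxF : x ∈ interior (F (β x) (phase g (β x) x)) := hxC.2 _ hβQ _ ⟨hxβ, rfl⟩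
  have hgx : phase g (β (g x)) (g x) = phase g (β x) x + 1 := by
    rw [show β (g x) = β x from ((mutuallyReachable_apply hle x).basePoint_eq hg Q).symm]
    exact phase_apply hg hle hxβ (fun h => hxC.1 _ hβQ 0 h.symm)
      fun n h => hgxC.1 _ hβQ n h.symm
  by_cases heven : Even (phase g (β x) x)
  · refine Or.inl ⟨interior_mono (fun y hy => ?_) hxF, fun hgxR => ?_⟩
    · exact (congrArg Even (hβF y hy)).mpr heven
    · exact Int.even_add_one.1 ((congrArg Even hgx).mp hgxR) heven
  · refine Or.inr ⟨interior_mono (fun y hy hyR => ?_) hxF, ?_⟩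
    · exact heven ((congrArg Even (hβF y hy)).mp hyR)
    · exact (congrArg Even hgx).mpr (Int.even_add_one.2 heven)

end Alternating

/-! ### Hereditary families of intervals -/

section Domination

open unitInterval

theorem exists_orderIso_lt_on_interior (A : Set I) :
    ∃ φ : I ≃o I, (∀ x ∈ interior A, x ≠ 0 → x ≠ 1 → φ x < x) ∧ ∀ x ∉ A, φ x = x := by
  set S : Set I := Aᶜ ∪ {0, 1}
  have hS0 : (0 : I) ∈ S := Or.inr (by simp)
  have hS1 : (1 : I) ∈ S := Or.inr (by simp)
  have hd : ∀ x : I, Metric.infDist x S ≤ x := fun x => by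
    simpa [Subtype.dist_eq, Real.dist_eq, abs_of_nonneg x.2.1] using
      Metric.infDist_le_dist_of_mem (x := x) hS0
  set f : I → I := fun x => ⟨x - Metric.infDist x S / 2,
    by linarith [hd x, x.2.1], by linarith [x.2.2, Metric.infDist_nonneg (x := x) (s := S)]⟩
  have hf_fix : ∀ x ∈ S, f x = x := fun x hx =>
    Subtype.ext (by simp [f, Metric.infDist_zero_of_mem hx])
  have hmono : StrictMono f := fun x y hxy => by
    have hlip := Metric.infDist_le_infDist_add_dist (s := S) (x := y) (y := x)
    have hxy' : (x : ℝ) < y := hxy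
    rw [Subtype.dist_eq, Real.dist_eq, abs_of_pos (sub_pos.2 hxy')] at hlip
    exact Subtype.mk_lt_mk.2 (by linarith)
  have hcont : Continuous f := Continuous.subtype_mk
    (continuous_subtype_val.sub ((Metric.continuous_infDist_pt S).div_const 2)) _
  have hsurj : Function.Surjective f := fun y => by
    refine intermediate_value_univ 0 1 hcont ?_
    rw [hf_fix 0 hS0, hf_fix 1 hS1]
    exact ⟨y.2.1, y.2.2⟩
  refine ⟨hmono.orderIsoOfSurjective f hsurj, fun x hx hx0 hx1 => ?_,
    fun x hx => hf_fix x (Or.inl hx)⟩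
  have hpos : 0 < Metric.infDist x S := by
    rw [← Metric.infDist_pos_iff_notMem_closure ⟨0, hS0⟩, closure_union, closure_compl,
      (Set.toFinite {(0 : I), 1}).isClosed.closure_eq]
    simp [hx, hx0, hx1]
  exact Subtype.mk_lt_mk.2 (by linarith)

theorem exists_countable_cofinal {α : Type*} [CompleteLinearOrder α] [TopologicalSpace α]
    [OrderTopology α] [FirstCountableTopology α] (U : Set α) :
    ∃ V ⊆ U, V.Countable ∧ ∀ u ∈ U, ∃ v ∈ V, u ≤ v := by
  rcases U.eq_empty_or_nonempty with rfl | hU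
  · exact ⟨∅, Subset.rfl, countable_empty, by simp⟩
  obtain ⟨w, -, hw, hwU⟩ := exists_seq_tendsto_sSup hU (OrderTop.bddAbove U)
  refine ⟨range w ∪ ({sSup U} ∩ U),
    union_subset (range_subset_iff.2 hwU) inter_subset_right,
    (countable_range w).union ((countable_singleton _).mono inter_subset_left), fun u hu => ?_⟩
  rcases (le_sSup hu).eq_or_lt with heq | hlt
  · exact ⟨u, Or.inr ⟨heq, hu⟩, le_rfl⟩
  · obtain ⟨n, hn⟩ := (hw.eventually (lt_mem_nhds hlt)).exists
    exact ⟨w n, Or.inl ⟨n, rfl⟩, hn.le⟩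

section Reach

variable {α : Type*} [CompleteLinearOrder α] {D : α → α → Prop} {s t : α}

/-- A relation, thought of as a family of intervals `[s, t]`, which is closed under passing to
subintervals. -/
def IsHereditary (D : α → α → Prop) : Prop := ∀ ⦃s s' t t'⦄, s ≤ s' → t' ≤ t → D s t → D s' t'

/-- The supremum of the right endpoints of the `D`-intervals starting at `x`. -/
noncomputable def reach (D : α → α → Prop) (x : α) : α := sSup {t | t = x ∨ D x t}

theorem le_reach (D : α → α → Prop) (x : α) : x ≤ reach D x := le_sSup (Or.inl rfl)

theorem le_reach_of_rel (h : D s t) : t ≤ reach D s := le_sSup (Or.inr h)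

theorem IsHereditary.rel_of_lt_reach (hD : IsHereditary D) (hst : s ≤ t) (h : t < reach D s) :
    D s t := by
  obtain ⟨u, rfl | hu, htu⟩ := lt_sSup_iff.1 h
  · exact absurd htu hst.not_gt
  · exact hD le_rfl htu.le hu

theorem IsHereditary.reach_mono (hD : IsHereditary D) : Monotone (reach D) := by
  intro x y hxy
  refine sSup_le ?_
  rintro t (rfl | h)
  · exact hxy.trans (le_reach D y)
  · exact le_reach_of_rel (hD hxy le_rfl h)

end Reach

theorem exists_countable_dominating {α : Type*} [CompleteLinearOrder α] [TopologicalSpace α]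
    [OrderTopology α] [FirstCountableTopology α] (D : α → α → Prop) {C : Set α}
    (hC : C.Countable) :
    ∃ C' : Set α, C'.Countable ∧ ∀ s t, D s t → s ∈ C ∨ t ∈ C →
      ∃ s' ∈ C', ∃ t' ∈ C', D s' t' ∧ s' ≤ s ∧ t ≤ t' := by
  choose V hVD hVc hV using fun s : α => exists_countable_cofinal {t | D s t}
  choose W hWD hWc hW using fun t : α => exists_countable_cofinal (α := αᵒᵈ) {s | D s t}
  refine ⟨C ∪ (⋃ c ∈ C, V c) ∪ ⋃ c ∈ C, W c, (hC.union (hC.biUnion fun c _ => hVc c)).union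
    (hC.biUnion fun c _ => hWc c), fun s t hst hmem => ?_⟩
  rcases hmem with hs | ht
  · obtain ⟨t', ht', htt'⟩ := hV s t hst
    exact ⟨s, Or.inl (Or.inl hs), t', Or.inl (Or.inr (mem_biUnion hs ht')), hVD s ht', le_rfl,
      htt'⟩
  · obtain ⟨s', hs', hss'⟩ := hW t s hst
    exact ⟨s', Or.inr (mem_biUnion ht hs'), t, Or.inl (Or.inl ht), hWD t hs', hss', le_rfl⟩

/-- If no member of `D` containing `[s, t]` has an endpoint in a suitable countable set, then `t`
is the reach of `s`. The alternating set of `reach D` then makes `φ₁` or `φ₂` move `s` to the left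
and fix `t`, and the enlarged interval can be shrunk to start in the countable set. -/
theorem IsHereditary.exists_orderIso_dominating {D : I → I → Prop} (hD : IsHereditary D) :
    ∃ φ₁ φ₂ : I ≃o I, ∃ C : Set I, C.Countable ∧
      ∀ s t, s < t → D s t → D (φ₁ s) (φ₁ t) → D (φ₂ s) (φ₂ t) →
        ∃ s' ∈ C, ∃ t' ∈ C, D s' t' ∧ s' ≤ s ∧ t ≤ t' := by
  obtain ⟨R, C₀, hC₀, hR⟩ := exists_alternating_set hD.reach_mono (le_reach D)
  obtain ⟨Q, hQc, hQ⟩ := TopologicalSpace.exists_countable_dense I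
  obtain ⟨φ₁, hφ₁, hφ₁'⟩ := exists_orderIso_lt_on_interior R
  obtain ⟨φ₂, hφ₂, hφ₂'⟩ := exists_orderIso_lt_on_interior Rᶜ
  obtain ⟨C, hC, hdom⟩ := exists_countable_dominating D
    ((hC₀.union hQc).union (Set.toFinite {(0 : I), 1}).countable)
  refine ⟨φ₁, φ₂, C, hC, fun s t hst hDst h₁ h₂ => ?_⟩
  by_contra hcon
  have hgeneric : ∀ s' t', D s' t' → s' ≤ s → t ≤ t' →
      s' ∉ C₀ ∪ Q ∪ {0, 1} ∧ t' ∉ C₀ ∪ Q ∪ {0, 1} := by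
    refine fun s' t' hD' hs' ht' => not_or.1 fun hmem => hcon ?_
    obtain ⟨s₀, hs₀, t₀, ht₀, hD₀, hss₀, htt₀⟩ := hdom s' t' hD' hmem
    exact ⟨s₀, hs₀, t₀, ht₀, hD₀, hss₀.trans hs', ht'.trans htt₀⟩
  obtain ⟨hsC, htC⟩ := hgeneric s t hDst le_rfl le_rfl
  have hreach : reach D s = t := by
    refine le_antisymm ?_ (le_reach_of_rel hDst)
    by_contra! hlt
    obtain ⟨q, hqQ, htq, hqr⟩ := hQ.exists_between hlt
    exact (hgeneric s q (hD.rel_of_lt_reach (hst.trans htq).le hqr) le_rfl htq.le).2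
      (Or.inl (Or.inr hqQ))
  have hno_enlarge : ∀ s', s' < s → ¬ D s' t := fun s' hs' hD' => by
    obtain ⟨q, hqQ, hsq, hqs⟩ := hQ.exists_between hs'
    exact (hgeneric q t (hD hsq.le le_rfl hD') hqs.le le_rfl).1 (Or.inl (Or.inr hqQ))
  simp only [mem_union, mem_insert_iff, mem_singleton_iff, not_or] at hsC htC
  rcases hR s (hreach.symm ▸ hst) hsC.1.1 (hreach.symm ▸ htC.1.1) with ⟨hs, ht⟩ | ⟨hs, ht⟩ <;>
    rw [hreach] at ht
  · exact hno_enlarge _ (hφ₁ s hs hsC.2.1 hsC.2.2) (hφ₁' t ht ▸ h₁)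
  · exact hno_enlarge _ (hφ₂ s hs hsC.2.1 hsC.2.2) (hφ₂' t (not_not.2 ht) ▸ h₂)

end Domination

/-! ### The essential norm and corners of nest algebra elements -/

section EssNorm

variable {S T K : H →L[ℂ] H} {r : ℝ}

theorem essNorm_nonneg (T : H →L[ℂ] H) : 0 ≤ essNorm T := Metric.infDist_nonneg

theorem essNorm_le_norm_sub (T : H →L[ℂ] H) (hK : IsCompactOperator K) :
    essNorm T ≤ ‖T - K‖ := by
  rw [← dist_eq_norm]
  exact Metric.infDist_le_dist_of_mem hK

theorem essNorm_le_norm (T : H →L[ℂ] H) : essNorm T ≤ ‖T‖ := by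
  simpa using essNorm_le_norm_sub T (K := 0) isCompactOperator_zero

theorem essNorm_eq_zero (hT : IsCompactOperator T) : essNorm T = 0 :=
  le_antisymm (by simpa using essNorm_le_norm_sub T hT) (essNorm_nonneg T)

theorem essNorm_zero : essNorm (0 : H →L[ℂ] H) = 0 := essNorm_eq_zero isCompactOperator_zero

theorem exists_isCompactOperator_norm_sub_lt (h : essNorm T < r) :
    ∃ K : H →L[ℂ] H, IsCompactOperator K ∧ ‖T - K‖ < r := by
  obtain ⟨K, hK, hTK⟩ := (Metric.infDist_lt_iff ⟨0, isCompactOperator_zero⟩).1 h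
  exact ⟨K, hK, by rwa [← dist_eq_norm]⟩

theorem essNorm_add_le (S T : H →L[ℂ] H) : essNorm (S + T) ≤ essNorm S + essNorm T := by
  refine le_of_forall_pos_le_add fun ε hε => ?_
  obtain ⟨K, hK, hSK⟩ := exists_isCompactOperator_norm_sub_lt (lt_add_of_pos_right (essNorm S)
    (half_pos hε))
  obtain ⟨L, hL, hTL⟩ := exists_isCompactOperator_norm_sub_lt (lt_add_of_pos_right (essNorm T)
    (half_pos hε))
  calc essNorm (S + T) ≤ ‖S + T - (K + L)‖ := essNorm_le_norm_sub _ (hK.add hL)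
    _ ≤ ‖S - K‖ + ‖T - L‖ := by rw [add_sub_add_comm]; exact norm_add_le _ _
    _ ≤ essNorm S + essNorm T + ε := by linarith

theorem norm_mul_mul_le_of_norm_le_one {R : Type*} [SeminormedRing R] {a b : R} (ha : ‖a‖ ≤ 1)
    (hb : ‖b‖ ≤ 1) (x : R) : ‖a * x * b‖ ≤ ‖x‖ :=
  calc ‖a * x * b‖ ≤ ‖a * x‖ * ‖b‖ := norm_mul_le _ _
    _ ≤ ‖a * x‖ := mul_le_of_le_one_right (norm_nonneg _) hb
    _ ≤ ‖a‖ * ‖x‖ := norm_mul_le _ _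
    _ ≤ ‖x‖ := mul_le_of_le_one_left (norm_nonneg _) ha

theorem essNorm_mul_mul_le {A B : H →L[ℂ] H} (hA : ‖A‖ ≤ 1) (hB : ‖B‖ ≤ 1) (T : H →L[ℂ] H) :
    essNorm (A * T * B) ≤ essNorm T := by
  refine le_of_forall_pos_le_add fun ε hε => ?_
  obtain ⟨K, hK, hTK⟩ := exists_isCompactOperator_norm_sub_lt (lt_add_of_pos_right (essNorm T) hε)
  calc essNorm (A * T * B) ≤ ‖A * T * B - A * K * B‖ :=
        essNorm_le_norm_sub _ ((hK.clm_comp A).comp_clm B)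
    _ = ‖A * (T - K) * B‖ := by rw [mul_sub, sub_mul]
    _ ≤ ‖T - K‖ := norm_mul_mul_le_of_norm_le_one hA hB _
    _ ≤ essNorm T + ε := hTK.le

end EssNorm

namespace ContinuousNest

open unitInterval

variable (𝒩 : ContinuousNest H)

theorem isStarProjection_N (t : I) : IsStarProjection (𝒩.N t) :=
  ⟨𝒩.idem t t.2, 𝒩.selfAdjoint t t.2⟩

theorem norm_N_le (t : I) : ‖𝒩.N t‖ ≤ 1 := (𝒩.isStarProjection_N t).norm_le

theorem norm_one_sub_N_le (t : I) : ‖1 - 𝒩.N t‖ ≤ 1 := (𝒩.isStarProjection_N t).one_sub.norm_le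

theorem N_mul_N_of_le {s t : I} (hst : s ≤ t) : 𝒩.N t * 𝒩.N s = 𝒩.N s := by
  rcases hst.eq_or_lt with rfl | hlt
  · exact 𝒩.idem s s.2
  ext x
  obtain ⟨y, hy⟩ := (𝒩.range_lt s t s.2 t.2 hlt).le ⟨x, rfl⟩
  change 𝒩.N t y = 𝒩.N s x at hy
  rw [mul_apply_eq_comp, ← hy]
  exact congrArg (· y) (𝒩.idem t t.2).eq

theorem N_mul_N (s t : I) : 𝒩.N s * 𝒩.N t = 𝒩.N ↑(min s t) := by
  rcases le_total s t with hst | hts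
  · simpa only [star_mul, (𝒩.selfAdjoint s s.2).star_eq, (𝒩.selfAdjoint t t.2).star_eq,
      min_eq_left hst] using congrArg star (𝒩.N_mul_N_of_le hst)
  · rw [min_eq_right hts, 𝒩.N_mul_N_of_le hts]

theorem N_injective : Function.Injective fun t : I => 𝒩.N t :=
  fun s t (hst : 𝒩.N s = 𝒩.N t) => by
    by_contra hne
    rcases lt_or_gt_of_ne hne with h | h
    · exact (𝒩.range_lt s t s.2 t.2 h).ne (by rw [hst])
    · exact (𝒩.range_lt t s t.2 s.2 h).ne (by rw [hst])

theorem isStarProjection_N_sub_N {s t : I} (hst : s ≤ t) :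
    IsStarProjection (𝒩.N t - 𝒩.N s) :=
  (𝒩.isStarProjection_N s).sub_of_mul_eq_left (𝒩.isStarProjection_N t)
    (by rw [𝒩.N_mul_N, min_eq_left hst])

theorem le_and_le_of_isPositive {s t s' t' : I} (hst : s < t) (hst' : s' ≤ t')
    (h : ((𝒩.N t' - 𝒩.N s') - (𝒩.N t - 𝒩.N s)).IsPositive) : s' ≤ s ∧ t ≤ t' := by
  have hE : (𝒩.N t' - 𝒩.N s') * (𝒩.N t - 𝒩.N s) = 𝒩.N t - 𝒩.N s :=
    ((𝒩.isStarProjection_N_sub_N hst.le).le_iff_mul_eq_right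
      (𝒩.isStarProjection_N_sub_N hst')).1 h
  have hs' : 𝒩.N s' * (𝒩.N t - 𝒩.N s) = 0 := by
    rw [← hE, ← mul_assoc, mul_sub (𝒩.N s'), N_mul_N, N_mul_N, min_eq_left hst', min_self,
      sub_self, zero_mul]
  have ht' : 𝒩.N t' * (𝒩.N t - 𝒩.N s) = 𝒩.N t - 𝒩.N s := by
    conv_lhs =>
      rw [← hE, ← mul_assoc, mul_sub (𝒩.N t'), N_mul_N, N_mul_N, min_eq_right hst', min_self, hE]
  rw [mul_sub, N_mul_N, N_mul_N] at hs' ht'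
  constructor
  · by_contra! hlt
    have := 𝒩.N_injective (sub_eq_zero.1 hs')
    rw [min_eq_right hlt.le] at this
    exact (lt_min hlt hst).ne' this
  · by_contra! hlt
    rw [min_eq_left hlt.le] at ht'
    rcases le_total s t' with hle | hle
    · rw [min_eq_right hle, sub_left_inj] at ht'
      exact hlt.ne (𝒩.N_injective ht')
    · rw [min_eq_left hle, sub_self, eq_comm, sub_eq_zero] at ht'
      exact hst.ne' (𝒩.N_injective ht')

theorem mem_alg_iff {T : H →L[ℂ] H} :
    T ∈ 𝒩.alg ↔ ∀ t : I, 𝒩.N t * T * 𝒩.N t = T * 𝒩.N t := by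
  simp only [alg, mem_ofPred_eq, sub_mul, one_mul, sub_eq_zero, Subtype.forall]
  exact forall₂_congr fun _ _ => eq_comm

/-- The nest algebra as a subalgebra of the bounded operators. -/
def nestAlgebra : Subalgebra ℂ (H →L[ℂ] H) where
  carrier := 𝒩.alg
  mul_mem' {S T} hS hT := 𝒩.mem_alg_iff.2 fun t => by
    have hS := 𝒩.mem_alg_iff.1 hS t
    have hT := 𝒩.mem_alg_iff.1 hT t
    calc 𝒩.N t * (S * T) * 𝒩.N t = 𝒩.N t * S * (T * 𝒩.N t) := by simp only [mul_assoc]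
      _ = 𝒩.N t * S * 𝒩.N t * T * 𝒩.N t := by rw [← hT]; simp only [mul_assoc]
      _ = S * (𝒩.N t * T * 𝒩.N t) := by rw [hS]; simp only [mul_assoc]
      _ = S * T * 𝒩.N t := by rw [hT, mul_assoc]
  add_mem' {S T} hS hT := 𝒩.mem_alg_iff.2 fun t => by
    rw [mul_add, add_mul, add_mul, 𝒩.mem_alg_iff.1 hS t, 𝒩.mem_alg_iff.1 hT t]
  algebraMap_mem' c := 𝒩.mem_alg_iff.2 fun t => by
    rw [← Algebra.commutes, mul_assoc, 𝒩.N_mul_N, min_self]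

theorem N_mem_nestAlgebra (s : I) : 𝒩.N s ∈ 𝒩.nestAlgebra := 𝒩.mem_alg_iff.2 fun t => by
  rw [N_mul_N, N_mul_N, N_mul_N, min_comm t s, min_assoc, min_self]

theorem N_mul_mul_one_sub_N_mem {s t : I} (hst : s ≤ t) (Z : H →L[ℂ] H) :
    𝒩.N s * Z * (1 - 𝒩.N t) ∈ 𝒩.nestAlgebra := by
  refine 𝒩.mem_alg_iff.2 fun u => ?_
  rcases le_total u t with hut | htu
  · have : (1 - 𝒩.N t) * 𝒩.N u = 0 := by
      rw [sub_mul, one_mul, 𝒩.N_mul_N, min_eq_right hut, sub_self]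
    rw [mul_assoc, mul_assoc _ _ (𝒩.N u), this, mul_zero, mul_zero]
  · simp only [← mul_assoc]
    rw [𝒩.N_mul_N, min_eq_right (hst.trans htu)]

theorem mem_nestAlgebra_of_tendsto {ι : Type*} {l : Filter ι} [l.NeBot] {Z : ι → H →L[ℂ] H}
    {T : H →L[ℂ] H} (hZ : ∀ i, Z i ∈ 𝒩.nestAlgebra)
    (h : ∀ x, Tendsto (fun i => Z i x) l (𝓝 (T x))) : T ∈ 𝒩.nestAlgebra := by
  refine 𝒩.mem_alg_iff.2 fun t => ContinuousLinearMap.ext fun x => ?_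
  refine tendsto_nhds_unique (((𝒩.N t).continuous.tendsto _).comp (h (𝒩.N t x))) ?_
  refine (h (𝒩.N t x)).congr fun i => ?_
  exact (congrArg (· x) (𝒩.mem_alg_iff.1 (hZ i) t)).symm

/-- The corner `(1 - N s) Y N t` of an operator `Y`. For `Y` in the nest algebra it is the
compression of `Y` to the interval `N t - N s`; unlike the compression it makes sense for all `s`
and `t`. -/
noncomputable def corner (s t : I) : (H →L[ℂ] H) →L[ℂ] H →L[ℂ] H :=
  ContinuousLinearMap.mulLeftRight ℂ (H →L[ℂ] H) (1 - 𝒩.N s) (𝒩.N t)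

theorem corner_apply (s t : I) (Y : H →L[ℂ] H) :
    𝒩.corner s t Y = (1 - 𝒩.N s) * Y * 𝒩.N t := rfl

theorem corner_mem_nestAlgebra (s t : I) {Y : H →L[ℂ] H} (hY : Y ∈ 𝒩.nestAlgebra) :
    𝒩.corner s t Y ∈ 𝒩.nestAlgebra :=
  mul_mem (mul_mem (sub_mem (one_mem _) (𝒩.N_mem_nestAlgebra s)) hY) (𝒩.N_mem_nestAlgebra t)

variable {𝒩} {s t s' t' : I} {Y Z : H →L[ℂ] H}

theorem compression_eq_corner (hst : s ≤ t) (hY : Y ∈ 𝒩.nestAlgebra) :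
    (𝒩.N t - 𝒩.N s) * Y * (𝒩.N t - 𝒩.N s) = 𝒩.corner s t Y := by
  have hs := 𝒩.mem_alg_iff.1 hY s
  have ht := 𝒩.mem_alg_iff.1 hY t
  have hts : 𝒩.N t * Y * 𝒩.N s = Y * 𝒩.N s := by
    rw [mul_assoc, ← hs, ← mul_assoc, ← mul_assoc, 𝒩.N_mul_N_of_le hst]
  rw [corner_apply, sub_mul, sub_mul, mul_sub, mul_sub, hts, ht, hs, sub_mul, sub_mul, one_mul]
  abel

theorem corner_corner (hs : s' ≤ s) (ht : t ≤ t') (Y : H →L[ℂ] H) :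
    𝒩.corner s t (𝒩.corner s' t' Y) = 𝒩.corner s t Y := by
  have hss : (1 - 𝒩.N s) * (1 - 𝒩.N s') = 1 - 𝒩.N s := by
    rw [sub_mul, mul_sub, mul_sub, 𝒩.N_mul_N, min_eq_right hs]
    simp
  calc (1 - 𝒩.N s) * ((1 - 𝒩.N s') * Y * 𝒩.N t') * 𝒩.N t
      = (1 - 𝒩.N s) * (1 - 𝒩.N s') * Y * (𝒩.N t' * 𝒩.N t) := by simp only [mul_assoc]
    _ = (1 - 𝒩.N s) * Y * 𝒩.N t := by rw [hss, 𝒩.N_mul_N_of_le ht]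

theorem corner_mul (hZ : Z ∈ 𝒩.nestAlgebra) (Y : H →L[ℂ] H) :
    𝒩.corner s t (Y * Z) = 𝒩.corner s t Y * Z * 𝒩.N t := by
  simp only [corner_apply, mul_assoc]
  rw [← mul_assoc (𝒩.N t) Z, 𝒩.mem_alg_iff.1 hZ t]

end ContinuousNest

/-! ### Parrott's lemma and Arveson's distance formula -/

section Parrott

open InnerProductSpace

variable {𝕜 E F G K : Type*} [RCLike 𝕜] [NormedAddCommGroup E] [InnerProductSpace 𝕜 E]
  [CompleteSpace E] [NormedAddCommGroup F] [InnerProductSpace 𝕜 F] [CompleteSpace F]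
  [NormedAddCommGroup G] [InnerProductSpace 𝕜 G] [CompleteSpace G] [NormedAddCommGroup K]
  [InnerProductSpace 𝕜 K] (A : E →L[𝕜] F) (B : G →L[𝕜] F) (C : E →L[𝕜] K) {c : ℝ}

/-- The operator `c² - A A†`, whose inverse occurs in the solution of Parrott's problem. -/
noncomputable def sqSubMulAdjoint (c : ℝ) : F →L[𝕜] F :=
  ((c ^ 2 : ℝ) : 𝕜) • 1 - A ∘L A.adjoint

theorem sqSubMulAdjoint_apply (c : ℝ) (x : F) :
    sqSubMulAdjoint A c x = ((c ^ 2 : ℝ) : 𝕜) • x - A (A.adjoint x) := rfl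

theorem re_inner_sqSubMulAdjoint_self (c : ℝ) (x : F) :
    RCLike.re (inner 𝕜 (sqSubMulAdjoint A c x) x) = c ^ 2 * ‖x‖ ^ 2 - ‖A.adjoint x‖ ^ 2 := by
  rw [sqSubMulAdjoint_apply, inner_sub_left, ← A.adjoint_inner_right, inner_smul_left, map_sub,
    inner_self_eq_norm_sq, RCLike.conj_ofReal, RCLike.re_ofReal_mul, inner_self_eq_norm_sq]

theorem isUnit_sqSubMulAdjoint (hc : ‖A‖ < c) : IsUnit (sqSubMulAdjoint A c) := by
  have hpos : 0 < c ^ 2 - ‖A‖ ^ 2 := sub_pos.2 (pow_lt_pow_left₀ hc (norm_nonneg A) two_ne_zero)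
  refine ContinuousLinearMap.isUnit_of_forall_le_norm_inner_map _
    (c := ⟨c ^ 2 - ‖A‖ ^ 2, hpos.le⟩) hpos fun x => ?_
  have hAx : ‖A.adjoint x‖ ≤ ‖A‖ * ‖x‖ := by
    simpa only [LinearIsometryEquiv.norm_map] using A.adjoint.le_opNorm x
  calc ‖x‖ ^ 2 * (c ^ 2 - ‖A‖ ^ 2) = c ^ 2 * ‖x‖ ^ 2 - (‖A‖ * ‖x‖) ^ 2 := by ring
    _ ≤ c ^ 2 * ‖x‖ ^ 2 - ‖A.adjoint x‖ ^ 2 := by gcongr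
    _ ≤ ‖inner 𝕜 (sqSubMulAdjoint A c x) x‖ := by
      rw [← re_inner_sqSubMulAdjoint_self]; exact RCLike.re_le_norm _

variable {A B C}

theorem norm_sq_add_norm_sq_le_of_sqSubMulAdjoint (hc : 0 < c)
    (hAC : ∀ x, ‖A x‖ ^ 2 + ‖C x‖ ^ 2 ≤ c ^ 2 * ‖x‖ ^ 2)
    (hAB : ∀ y, ‖A.adjoint y‖ ^ 2 + ‖B.adjoint y‖ ^ 2 ≤ c ^ 2 * ‖y‖ ^ 2)
    (a : E) {b : G} {y : F} (hy : sqSubMulAdjoint A c y = B b) :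
    ‖A a + B b‖ ^ 2 + ‖C (a - A.adjoint y)‖ ^ 2 ≤ c ^ 2 * (‖a‖ ^ 2 + ‖b‖ ^ 2) := by
  set x := a - A.adjoint y with hx
  set p := A a + B b with hp
  set r := RCLike.re (inner 𝕜 (A a) y)
  set s := RCLike.re (inner 𝕜 (B b) y) with hs
  have hs_eq : s = c ^ 2 * ‖y‖ ^ 2 - ‖A.adjoint y‖ ^ 2 := by
    rw [hs, ← hy, re_inner_sqSubMulAdjoint_self]
  have hx_sq : ‖x‖ ^ 2 = ‖a‖ ^ 2 - 2 * r + ‖A.adjoint y‖ ^ 2 := by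
    rw [hx, norm_sub_sq (𝕜 := 𝕜), A.adjoint_inner_right]
  have hAx : A x = p - ((c ^ 2 : ℝ) : 𝕜) • y := by
    rw [hp, ← hy, sqSubMulAdjoint_apply, hx, map_sub]
    abel
  have hAx_sq : ‖A x‖ ^ 2 = ‖p‖ ^ 2 - 2 * (c ^ 2 * (r + s)) + c ^ 4 * ‖y‖ ^ 2 := by
    rw [hAx, norm_sub_sq (𝕜 := 𝕜), inner_smul_right, RCLike.re_ofReal_mul, hp, inner_add_left,
      map_add, norm_smul, RCLike.norm_ofReal, abs_of_nonneg (sq_nonneg c)]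
    ring
  have hs_le : s ≤ ‖b‖ * ‖B.adjoint y‖ := by
    rw [hs, ← B.adjoint_inner_right]
    exact (RCLike.re_le_norm _).trans (norm_inner_le_norm _ _)
  have hs_le_sq : s ≤ ‖b‖ ^ 2 := by
    have hB : ‖B.adjoint y‖ ^ 2 ≤ s := by linarith [hAB y]
    nlinarith [sq_nonneg (‖b‖ - ‖B.adjoint y‖)]
  have hps : ‖p‖ ^ 2 + ‖C x‖ ^ 2 ≤ c ^ 2 * (‖a‖ ^ 2 + s) := by
    have := hAC x
    rw [hAx_sq, hx_sq] at this
    rw [eq_sub_iff_add_eq] at hs_eq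
    nlinarith
  exact hps.trans (by gcongr)

/-- Parrott's lemma. Unlike the abstract statement, this form shows that the missing corner
vanishes if the opposite corner does. -/
theorem exists_parrott_completion (hc : ‖A‖ < c)
    (hAC : ∀ x, ‖A x‖ ^ 2 + ‖C x‖ ^ 2 ≤ c ^ 2 * ‖x‖ ^ 2)
    (hAB : ∀ y, ‖A.adjoint y‖ ^ 2 + ‖B.adjoint y‖ ^ 2 ≤ c ^ 2 * ‖y‖ ^ 2) :
    ∃ W : F →L[𝕜] E, (A = 0 → W = 0) ∧ ∀ a b,
      ‖A a + B b‖ ^ 2 + ‖C (a + W (B b))‖ ^ 2 ≤ c ^ 2 * (‖a‖ ^ 2 + ‖b‖ ^ 2) := by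
  obtain ⟨U, hU⟩ := isUnit_sqSubMulAdjoint A hc
  refine ⟨-(A.adjoint ∘L ↑U⁻¹), fun hA => by simp [hA], fun a b => ?_⟩
  have hy : sqSubMulAdjoint A c ((↑U⁻¹ : F →L[𝕜] F) (B b)) = B b := by
    rw [← hU, ← mul_apply_eq_comp, U.mul_inv, one_apply_eq_self]
  simpa only [sub_eq_add_neg, neg_apply, ContinuousLinearMap.comp_apply] using
    norm_sq_add_norm_sq_le_of_sqSubMulAdjoint ((norm_nonneg A).trans_lt hc) hAC hAB a hy

end Parrott

section BlockCompletion

variable {𝕜 E : Type*} [RCLike 𝕜] [NormedAddCommGroup E] [InnerProductSpace 𝕜 E] [CompleteSpace E]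
  {P P₁ P₂ Q₁ Q₂ T Y : E →L[𝕜] E} {c ρ : ℝ}

theorem norm_add_sq_of_mul_eq_zero (hP : IsSelfAdjoint P₁) (h : P₁ * P₂ = 0) (x y : E) :
    ‖P₁ x + P₂ y‖ ^ 2 = ‖P₁ x‖ ^ 2 + ‖P₂ y‖ ^ 2 := by
  have hinner : inner 𝕜 (P₁ x) (P₂ y) = 0 := by
    refine (hP.isSymmetric x (P₂ y)).trans ?_
    rw [ContinuousLinearMap.coe_coe, ← mul_apply_eq_comp, h, zero_apply, inner_zero_right]
  simp [norm_add_sq (𝕜 := 𝕜), hinner]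

theorem norm_sq_add_norm_sq_le_of_mul_eq_zero (hP : IsSelfAdjoint P₁) (h : P₁ * P₂ = 0)
    (hT : ‖(P₁ + P₂) * T‖ ≤ c) (x : E) :
    ‖(P₁ * T) x‖ ^ 2 + ‖(P₂ * T) x‖ ^ 2 ≤ c ^ 2 * ‖x‖ ^ 2 :=
  calc ‖(P₁ * T) x‖ ^ 2 + ‖(P₂ * T) x‖ ^ 2 = ‖((P₁ + P₂) * T) x‖ ^ 2 :=
        (norm_add_sq_of_mul_eq_zero hP h _ _).symm
    _ ≤ (c * ‖x‖) ^ 2 := by gcongr; exact ContinuousLinearMap.le_of_opNorm_le _ hT x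
    _ = c ^ 2 * ‖x‖ ^ 2 := mul_pow _ _ _

theorem norm_block_le (hc : 0 ≤ c) (hP₁ : IsSelfAdjoint P₁) (hP : P₁ * P₂ = 0)
    (hQ₁ : IsStarProjection Q₁) (hQ₂ : IsStarProjection Q₂) (hQ : Q₁ * Q₂ = 0)
    {A B C D : E →L[𝕜] E}
    (h : ∀ a b, ‖P₁ (A a + B b)‖ ^ 2 + ‖P₂ (C a + D b)‖ ^ 2 ≤ c ^ 2 * (‖a‖ ^ 2 + ‖b‖ ^ 2)) :
    ‖P₁ * (A * Q₁ + B * Q₂) + P₂ * (C * Q₁ + D * Q₂)‖ ≤ c := by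
  refine ContinuousLinearMap.opNorm_le_bound _ hc fun x => le_of_sq_le_sq ?_ (by positivity)
  have hQx : ‖Q₁ x‖ ^ 2 + ‖Q₂ x‖ ^ 2 ≤ ‖x‖ ^ 2 := by
    have hsum : ‖(Q₁ + Q₂) * 1‖ ≤ 1 := by
      rw [mul_one]
      exact (hQ₁.add hQ₂ hQ).norm_le
    simpa using norm_sq_add_norm_sq_le_of_mul_eq_zero hQ₁.isSelfAdjoint hQ hsum x
  calc _ = ‖P₁ (A (Q₁ x) + B (Q₂ x))‖ ^ 2 + ‖P₂ (C (Q₁ x) + D (Q₂ x))‖ ^ 2 :=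
        norm_add_sq_of_mul_eq_zero hP₁ hP _ _
    _ ≤ c ^ 2 * (‖Q₁ x‖ ^ 2 + ‖Q₂ x‖ ^ 2) := h _ _
    _ ≤ (c * ‖x‖) ^ 2 := by rw [mul_pow]; gcongr

theorem norm_sq_add_norm_sq_adjoint_le_of_mul_eq_zero (hP : IsSelfAdjoint P)
    (hQ₁ : IsSelfAdjoint Q₁) (hQ₂ : IsSelfAdjoint Q₂) (hQ : Q₁ * Q₂ = 0)
    (hY : ‖P * Y * (Q₁ + Q₂)‖ ≤ c) (x : E) :
    ‖(P * Y * Q₁).adjoint x‖ ^ 2 + ‖(P * Y * Q₂).adjoint x‖ ^ 2 ≤ c ^ 2 * ‖x‖ ^ 2 := by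
  have hstar : ∀ {Q : E →L[𝕜] E}, IsSelfAdjoint Q → star (P * Y * Q) = Q * (star Y * P) := by
    intro Q h
    rw [star_mul, star_mul, h.star_eq, hP.star_eq]
  rw [← norm_star, hstar (hQ₁.add hQ₂)] at hY
  simpa only [← ContinuousLinearMap.star_eq_adjoint, hstar hQ₁, hstar hQ₂] using
    norm_sq_add_norm_sq_le_of_mul_eq_zero hQ₁ hQ hY x

theorem exists_block_completion (hP₁ : IsStarProjection P₁) (hP₂ : IsStarProjection P₂)
    (hQ₁ : IsStarProjection Q₁) (hQ₂ : IsStarProjection Q₂) (hP : P₁ * P₂ = 0) (hQ : Q₁ * Q₂ = 0)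
    (hcol : ‖(P₁ + P₂) * Y * Q₁‖ < ρ) (hrow : ‖P₁ * Y * (Q₁ + Q₂)‖ < ρ) :
    ∃ D, P₂ * D * Q₂ = D ∧ (P₁ * Y * Q₁ = 0 → D = 0) ∧
      ‖P₁ * Y * (Q₁ + Q₂) + P₂ * Y * Q₁ + D‖ < ρ := by
  obtain ⟨c, hc, hcρ⟩ := exists_between (max_lt hcol hrow)
  have hcol : ‖(P₁ + P₂) * Y * Q₁‖ < c := (le_max_left _ _).trans_lt hc
  have hrow : ‖P₁ * Y * (Q₁ + Q₂)‖ < c := (le_max_right _ _).trans_lt hc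
  have hA : ‖P₁ * Y * Q₁‖ < c := by
    have : P₁ * ((P₁ + P₂) * Y * Q₁) = P₁ * Y * Q₁ := by
      rw [← mul_assoc, ← mul_assoc, mul_add, hP₁.isIdempotentElem.eq, hP, add_zero]
    calc ‖P₁ * Y * Q₁‖ = ‖P₁ * ((P₁ + P₂) * Y * Q₁)‖ := by rw [this]
      _ ≤ ‖P₁‖ * ‖(P₁ + P₂) * Y * Q₁‖ := norm_mul_le _ _
      _ ≤ ‖(P₁ + P₂) * Y * Q₁‖ := mul_le_of_le_one_left (norm_nonneg _) hP₁.norm_le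
      _ < c := hcol
  rw [mul_assoc] at hcol
  obtain ⟨W, hW₀, hW⟩ := exists_parrott_completion (A := P₁ * Y * Q₁) (B := P₁ * Y * Q₂)
    (C := P₂ * Y * Q₁) hA
    (by simpa only [mul_assoc] using
      norm_sq_add_norm_sq_le_of_mul_eq_zero hP₁.isSelfAdjoint hP hcol.le)
    (norm_sq_add_norm_sq_adjoint_le_of_mul_eq_zero hP₁.isSelfAdjoint hQ₁.isSelfAdjoint
      hQ₂.isSelfAdjoint hQ hrow.le)
  refine ⟨P₂ * Y * Q₁ * W * (P₁ * Y * Q₂), ?_, fun hA => by simp [hW₀ hA], ?_⟩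
  · simp only [← mul_assoc, hP₂.isIdempotentElem.eq]
    simp only [mul_assoc, hQ₂.isIdempotentElem.eq]
  have hle := norm_block_le (A := Y * Q₁) (B := Y * Q₂) (C := Y * Q₁)
    (D := Y * Q₁ * W * (P₁ * Y * Q₂)) ((norm_nonneg _).trans hA.le) hP₁.isSelfAdjoint hP hQ₁ hQ₂ hQ
    fun a b => by simpa only [map_add, mul_apply_eq_comp] using hW a b
  refine lt_of_eq_of_lt (congrArg norm ?_) (hle.trans_lt hcρ)
  simp only [mul_add, mul_assoc, hQ₁.isIdempotentElem.eq, hQ₂.isIdempotentElem.eq, add_assoc]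

end BlockCompletion

namespace ContinuousNest

open unitInterval

variable {𝒩 : ContinuousNest H} {s t s₁ s₂ t₁ t₂ : I} {D Y : H →L[ℂ] H} {ρ : ℝ}

theorem corner_eq_zero (hD : (𝒩.N s₂ - 𝒩.N s₁) * D * (𝒩.N t₂ - 𝒩.N t₁) = D) (hs : s₁ ≤ s₂)
    (ht : t₁ ≤ t₂) (hst : s₂ ≤ s ∨ t ≤ t₁) : 𝒩.corner s t D = 0 := by
  rw [corner_apply, ← hD]
  rcases hst with hs₂ | ht₁
  · have : (1 - 𝒩.N s) * (𝒩.N s₂ - 𝒩.N s₁) = 0 := by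
      simp [sub_mul, mul_sub, N_mul_N, hs₂, hs.trans hs₂]
    rw [← mul_assoc, ← mul_assoc, this, zero_mul, zero_mul, zero_mul]
  · have : (𝒩.N t₂ - 𝒩.N t₁) * 𝒩.N t = 0 := by
      rw [sub_mul, N_mul_N_of_le _ ht₁, N_mul_N_of_le _ (ht₁.trans ht), sub_self]
    rw [mul_assoc, mul_assoc, this, mul_zero, mul_zero]

theorem corner_eq_self (hD : (𝒩.N s₂ - 𝒩.N s₁) * D * (𝒩.N t₂ - 𝒩.N t₁) = D) (hs : s₁ ≤ s₂)
    (ht : t₁ ≤ t₂) : 𝒩.corner s₁ t₂ D = D := by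
  have hl : (1 - 𝒩.N s₁) * (𝒩.N s₂ - 𝒩.N s₁) = 𝒩.N s₂ - 𝒩.N s₁ := by
    simp [sub_mul, mul_sub, N_mul_N, hs]
  have hr : (𝒩.N t₂ - 𝒩.N t₁) * 𝒩.N t₂ = 𝒩.N t₂ - 𝒩.N t₁ := by
    rw [sub_mul, N_mul_N, N_mul_N, min_eq_left ht, min_self]
  rw [corner_apply, ← hD, mul_assoc _ _ (𝒩.N t₂), mul_assoc _ _ (𝒩.N t₂), hr, ← mul_assoc,
    ← mul_assoc, hl, mul_assoc]

/-- The two given corners overlap in `(1 - N s₂) Y N t₁`; the block to be corrected is the one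
opposite to it. -/
theorem exists_merge_corners (hY : Y ∈ 𝒩.nestAlgebra) (hs : s₁ ≤ s₂) (ht : t₁ ≤ t₂)
    (h₁ : ‖𝒩.corner s₁ t₁ Y‖ < ρ) (h₂ : ‖𝒩.corner s₂ t₂ Y‖ < ρ) :
    ∃ D ∈ 𝒩.nestAlgebra, (∀ s t, s₂ ≤ s ∨ t ≤ t₁ → 𝒩.corner s t D = 0) ∧
      ‖𝒩.corner s₁ t₂ (Y + D)‖ < ρ := by
  set p := 1 - 𝒩.N s₂ with hp
  set e := 𝒩.N s₂ - 𝒩.N s₁ with he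
  set q := 𝒩.N t₁ with hq
  set r := 𝒩.N t₂ - 𝒩.N t₁ with hr
  have hpe : p + e = 1 - 𝒩.N s₁ := sub_add_sub_cancel _ _ _
  have hqr : q + r = 𝒩.N t₂ := add_sub_cancel _ _
  have hpe₀ : p * e = 0 := by simp [hp, he, sub_mul, mul_sub, N_mul_N, hs]
  have hqr₀ : q * r = 0 := by simp [hq, hr, mul_sub, N_mul_N, ht]
  have hpP : IsStarProjection p := (𝒩.isStarProjection_N s₂).one_sub
  have heP : IsStarProjection e := 𝒩.isStarProjection_N_sub_N hs
  have hrP : IsStarProjection r := 𝒩.isStarProjection_N_sub_N ht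
  obtain ⟨D, hD, hD₀, hDρ⟩ := exists_block_completion (Y := Y) hpP heP (𝒩.isStarProjection_N t₁)
    hrP hpe₀ hqr₀ (by rwa [hpe]) (by rwa [hqr])
  have hDalg : D ∈ 𝒩.nestAlgebra := by
    rcases le_total s₂ t₁ with hst | hts
    · have hl : 𝒩.N s₂ * e = e := by simp [he, mul_sub, N_mul_N, hs]
      have hr' : r * (1 - 𝒩.N t₁) = r := by simp [hr, sub_mul, mul_sub, N_mul_N, ht]
      rw [← hD, ← hl, ← hr']
      simpa only [mul_assoc] using 𝒩.N_mul_mul_one_sub_N_mem hst (e * D * r)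
    · suffices p * Y * q = 0 from hD₀ this ▸ zero_mem _
      rw [mul_assoc, ← 𝒩.mem_alg_iff.1 hY t₁, ← mul_assoc, ← mul_assoc, hp, sub_mul,
        N_mul_N_of_le _ hts, one_mul, sub_self, zero_mul, zero_mul]
  have hblock : e * (D - e * Y * r) * r = D - e * Y * r := by
    have : e * (e * Y * r) * r = e * Y * r := by
      rw [← mul_assoc, ← mul_assoc, heP.isIdempotentElem.eq, mul_assoc, hrP.isIdempotentElem.eq]
    rw [mul_sub e, sub_mul _ _ r, hD, this]
  refine ⟨D - e * Y * r, sub_mem hDalg (mul_mem (mul_mem (sub_mem (𝒩.N_mem_nestAlgebra _)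
    (𝒩.N_mem_nestAlgebra _)) hY) (sub_mem (𝒩.N_mem_nestAlgebra _) (𝒩.N_mem_nestAlgebra _))),
    fun s t => corner_eq_zero hblock hs ht, ?_⟩
  rw [map_add, corner_eq_self hblock hs ht, corner_apply, ← hpe, ← hqr]
  refine lt_of_eq_of_lt (congrArg norm ?_) hDρ
  noncomm_ring

theorem exists_extension_of_norm_corner_lt (hρ : 0 < ρ) (hY : Y ∈ 𝒩.nestAlgebra)
    (S : Finset (I × I)) (hS : ∀ p ∈ S, ‖𝒩.corner p.1 p.2 Y‖ < ρ) :
    ∃ t, ∃ Z ∈ 𝒩.nestAlgebra, ‖𝒩.corner 0 t Z‖ < ρ ∧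
      (∀ p ∈ S, p.2 ≤ t ∧ 𝒩.corner p.1 p.2 Z = 𝒩.corner p.1 p.2 Y) ∧
      ∀ u v, (∀ p ∈ S, p.1 ≤ u) → 𝒩.corner u v Z = 𝒩.corner u v Y := by
  classical
  revert hS
  refine Finset.induction_on_max_value Prod.fst S (fun _ => ?_) fun a S _ hmax ih hS => ?_
  · exact ⟨0, Y, hY, by simpa [corner_apply, 𝒩.N_zero] using hρ, by simp, by simp⟩
  · rw [Finset.forall_mem_insert] at hS
    obtain ⟨t, Z, hZ, hZρ, hZS, hZY⟩ := ih hS.2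
    rcases le_total a.2 t with hat | hta
    · refine ⟨t, Z, hZ, hZρ, (Finset.forall_mem_insert _ _ _).2 ⟨⟨hat, hZY _ _ hmax⟩, hZS⟩, ?_⟩
      exact fun u v huv => hZY u v fun p hp => huv p (Finset.mem_insert_of_mem hp)
    · obtain ⟨D, hD, hD₀, hDρ⟩ := exists_merge_corners hZ (unitInterval.nonneg a.1) hta hZρ
        (by rw [hZY _ _ hmax]; exact hS.1)
      refine ⟨a.2, Z + D, add_mem hZ hD, hDρ, (Finset.forall_mem_insert _ _ _).2
        ⟨⟨le_rfl, ?_⟩, fun p hp => ⟨(hZS p hp).1.trans hta, ?_⟩⟩, fun u v huv => ?_⟩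
      · rw [map_add, hD₀ _ _ (Or.inl le_rfl), add_zero, hZY _ _ hmax]
      · rw [map_add, hD₀ _ _ (Or.inr (hZS p hp).1), add_zero, (hZS p hp).2]
      · rw [Finset.forall_mem_insert] at huv
        rw [map_add, hD₀ _ _ (Or.inl huv.1), add_zero, hZY _ _ huv.2]

/-- Arveson's distance formula for finitely many corners, proved by merging the corners in order
of their left endpoints. -/
theorem exists_mem_nestAlgebra_norm_lt_corner_eq (hρ : 0 < ρ) (hY : Y ∈ 𝒩.nestAlgebra)
    (S : Finset (I × I)) (hS : ∀ p ∈ S, ‖𝒩.corner p.1 p.2 Y‖ < ρ) :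
    ∃ Z ∈ 𝒩.nestAlgebra, ‖Z‖ < ρ ∧ ∀ p ∈ S, 𝒩.corner p.1 p.2 Z = 𝒩.corner p.1 p.2 Y := by
  obtain ⟨t, Z, hZ, hZρ, hZS, -⟩ := exists_extension_of_norm_corner_lt hρ hY S hS
  refine ⟨𝒩.corner 0 t Z, 𝒩.corner_mem_nestAlgebra 0 t hZ, hZρ, fun p hp => ?_⟩
  rw [corner_corner (unitInterval.nonneg _) (hZS p hp).1, (hZS p hp).2]

end ContinuousNest

/-! ### Triangular approximate units -/

section Accretive

variable {𝕜 E : Type*} [RCLike 𝕜] [NormedAddCommGroup E] [InnerProductSpace 𝕜 E]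

theorem norm_sq_add_norm_smul_sq_le {v y : E} {δ : ℝ} (hδ₀ : 0 ≤ δ) (hδ₁ : δ ≤ 1)
    (h : -(δ ^ 2 / 4 * ‖y‖ ^ 2) ≤ RCLike.re (inner 𝕜 v y)) :
    ‖v‖ ^ 2 + ‖(δ : 𝕜) • y‖ ^ 2 ≤ (1 + δ) * ‖v + (δ : 𝕜) • y‖ ^ 2 := by
  have hexpand : ‖v + (δ : 𝕜) • y‖ ^ 2 =
      ‖v‖ ^ 2 + 2 * (δ * RCLike.re (inner 𝕜 v y)) + δ ^ 2 * ‖y‖ ^ 2 := by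
    rw [norm_add_sq (𝕜 := 𝕜), inner_smul_right, RCLike.re_ofReal_mul, norm_smul,
      RCLike.norm_ofReal, abs_of_nonneg hδ₀, mul_pow]
  have hlower : ‖v‖ ^ 2 + (1 - δ / 2) * (δ ^ 2 * ‖y‖ ^ 2) ≤ ‖v + (δ : 𝕜) • y‖ ^ 2 := by
    rw [hexpand]
    linarith [mul_le_mul_of_nonneg_left h hδ₀]
  calc ‖v‖ ^ 2 + ‖(δ : 𝕜) • y‖ ^ 2 = 1 * ‖v‖ ^ 2 + 1 * (δ ^ 2 * ‖y‖ ^ 2) := by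
        rw [norm_smul, RCLike.norm_ofReal, abs_of_nonneg hδ₀, mul_pow, one_mul, one_mul]
    _ ≤ (1 + δ) * ‖v‖ ^ 2 + (1 + δ) * (1 - δ / 2) * (δ ^ 2 * ‖y‖ ^ 2) := by
        gcongr
        · linarith
        · nlinarith
    _ = (1 + δ) * (‖v‖ ^ 2 + (1 - δ / 2) * (δ ^ 2 * ‖y‖ ^ 2)) := by ring
    _ ≤ (1 + δ) * ‖v + (δ : 𝕜) • y‖ ^ 2 := by gcongr

theorem norm_smul_sq_le_of_norm_inner_sq_le {v y : E} {δ : ℝ} (hδ₀ : 0 ≤ δ) (hδ₁ : δ ≤ 1)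
    (h : ‖inner 𝕜 (v + (δ : 𝕜) • y) y‖ ^ 2 / 2 - δ ^ 2 / 4 * ‖y‖ ^ 2 ≤ RCLike.re (inner 𝕜 v y)) :
    ‖(δ : 𝕜) • y‖ ^ 2 ≤ δ := by
  set f := v + (δ : 𝕜) • y with hf
  have hre : RCLike.re (inner 𝕜 v y) = RCLike.re (inner 𝕜 f y) - δ * ‖y‖ ^ 2 := by
    rw [hf, inner_add_left, inner_smul_left, RCLike.conj_ofReal, map_add, RCLike.re_ofReal_mul,
      inner_self_eq_norm_sq, add_sub_cancel_right]
  have hδy : δ * ‖y‖ ^ 2 * (1 - δ / 4) ≤ 1 / 2 := by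
    nlinarith [RCLike.re_le_norm (inner 𝕜 f y), sq_nonneg (‖inner 𝕜 f y‖ - 1)]
  have hle : δ * ‖y‖ ^ 2 ≤ 1 := by nlinarith [mul_nonneg hδ₀ (sq_nonneg ‖y‖)]
  calc ‖(δ : 𝕜) • y‖ ^ 2 = δ * (δ * ‖y‖ ^ 2) := by
        rw [norm_smul, RCLike.norm_ofReal, abs_of_nonneg hδ₀]; ring
    _ ≤ δ := mul_le_of_le_one_right hδ₀ hle

theorem mul_eq_mul_mul_of_coercive [CompleteSpace E] {P T W : E →L[𝕜] E} {c : ℝ}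
    (hP : IsStarProjection P) (hc : 0 < c) (hT : ∀ x, c * ‖x‖ ^ 2 ≤ ‖inner 𝕜 (T x) x‖)
    (hPT : P * T * P = T * P) (hTW : T * W = 1) : P * W * P = W * P := by
  ext x
  rw [eq_comm, ← sub_eq_zero]
  set z := (W * P) x - (P * W * P) x with hz
  have hPz : P z = 0 := by
    rw [hz, map_sub, sub_eq_zero, ← mul_apply_eq_comp, ← mul_apply_eq_comp, ← mul_assoc,
      ← mul_assoc, ← mul_assoc, hP.isIdempotentElem]
  have hTz : P (T z) = T z := by
    have : P * T * (W * P - P * W * P) = T * (W * P - P * W * P) := by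
      rw [mul_sub, mul_sub, mul_assoc P T (W * P), ← mul_assoc T W, hTW, one_mul,
        hP.isIdempotentElem, mul_assoc P W, ← mul_assoc (P * T) P, hPT, ← mul_assoc T P]
    exact congrArg (· x) this
  have hinner : inner 𝕜 (T z) z = 0 := by
    rw [← hTz]
    refine (hP.isSelfAdjoint.isSymmetric (T z) z).trans ?_
    rw [ContinuousLinearMap.coe_coe, hPz, inner_zero_right]
  have hnorm := hT z
  rw [hinner, norm_zero] at hnorm
  exact norm_eq_zero.1 (pow_eq_zero_iff two_ne_zero |>.1
    (le_antisymm (nonpos_of_mul_nonpos_right hnorm hc) (by positivity)))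

end Accretive

section Compact

variable {𝕜 E F G : Type*} [RCLike 𝕜] [NormedAddCommGroup E] [NormedSpace 𝕜 E]
  [NormedAddCommGroup F] [NormedSpace 𝕜 F] [NormedAddCommGroup G] [NormedSpace 𝕜 G]
  {ι : Type*} {l : Filter ι} {M : ℝ}

theorem equicontinuous_of_norm_le {T : ι → E →L[𝕜] F} (hM : ∀ i, ‖T i‖ ≤ M) :
    Equicontinuous fun i x => T i x :=
  (LipschitzWith.uniformEquicontinuous _ M.toNNReal fun i =>
    (T i).lipschitzWith_of_opNorm_le
      ((hM i).trans (Real.le_coe_toNNReal M))).equicontinuous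

theorem tendsto_zero_of_denseRange {T : ι → E →L[𝕜] F} (hM : ∀ i, ‖T i‖ ≤ M) {κ : Type*}
    {d : κ → E} (hd : DenseRange d) (h : ∀ k, Tendsto (fun i => T i (d k)) l (𝓝 0)) (x : E) :
    Tendsto (fun i => T i x) l (𝓝 0) :=
  hd.induction_on (p := fun x => Tendsto (fun i => T i x) l (𝓝 0)) x
    ((equicontinuous_of_norm_le hM).isClosed_setOfPred_tendsto continuous_const) h

theorem tendsto_norm_comp_of_isCompactOperator {T : ι → F →L[𝕜] G} (hM : ∀ i, ‖T i‖ ≤ M)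
    (hT : ∀ x, Tendsto (fun i => T i x) l (𝓝 0)) {C : E →L[𝕜] F} (hC : IsCompactOperator C) :
    Tendsto (fun i => ‖(T i).comp C‖) l (𝓝 0) := by
  obtain ⟨K, hK, hCK⟩ := hC.image_closedBall_subset_compact (f := C.toLinearMap) 1
  have hunif : TendstoUniformlyOn (fun i x => T i x) 0 l K := by
    refine (tendstoLocallyUniformlyOn_iff_tendstoUniformlyOn_of_compact hK).1 ?_
    refine Metric.tendstoLocallyUniformlyOn_iff.2 fun ε hε x _ => ?_
    refine ⟨_, mem_nhdsWithin_of_mem_nhds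
      (Metric.equicontinuousAt_iff_right.1 (equicontinuous_of_norm_le hM x) _ (half_pos hε)), ?_⟩
    filter_upwards [Metric.tendsto_nhds.1 (hT x) _ (half_pos hε)] with i hi y hy
    calc dist 0 (T i y) ≤ dist 0 (T i x) + dist (T i x) (T i y) := dist_triangle _ _ _
      _ < ε := by linarith [dist_comm (T i x) 0, (hy i : dist (T i x) (T i y) < ε / 2)]
  refine Metric.tendsto_nhds.2 fun ε hε => ?_
  filter_upwards [Metric.tendstoUniformlyOn_iff.1 hunif _ (half_pos hε)] with i hi
  have hle : ‖(T i).comp C‖ ≤ ε / 2 :=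
    ContinuousLinearMap.opNorm_le_of_unit_norm (𝕜 := 𝕜) (by positivity) fun x hx => by
      simpa using (hi (C x) (hCK ⟨x, by simp [hx], rfl⟩)).le
  rw [Real.dist_eq, sub_zero, abs_of_nonneg (norm_nonneg _)]
  linarith

theorem tendsto_norm_mul_of_isCompactOperator {E : Type*} [NormedAddCommGroup E]
    [InnerProductSpace 𝕜 E] [CompleteSpace E] {T : ι → E →L[𝕜] E} (hM : ∀ i, ‖T i‖ ≤ M)
    (hT : ∀ x, Tendsto (fun i => (T i).adjoint x) l (𝓝 0)) {C : E →L[𝕜] E}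
    (hC : IsCompactOperator C) : Tendsto (fun i => ‖C * T i‖) l (𝓝 0) := by
  have hadj : Tendsto (fun i => ‖(T i).adjoint * (star C * C)‖) l (𝓝 0) :=
    tendsto_norm_comp_of_isCompactOperator (fun i => by simpa using hM i) hT (hC.clm_comp (star C))
  have hsq : ∀ i, ‖C * T i‖ ^ 2 ≤ ‖(T i).adjoint * (star C * C)‖ * M := fun i =>
    calc ‖C * T i‖ ^ 2 = ‖star (C * T i) * (C * T i)‖ :=
          (sq _).trans CStarRing.norm_star_mul_self.symm
      _ = ‖(T i).adjoint * (star C * C) * T i‖ := by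
        rw [star_mul, ContinuousLinearMap.star_eq_adjoint (T i)]; simp only [mul_assoc]
      _ ≤ ‖(T i).adjoint * (star C * C)‖ * ‖T i‖ := norm_mul_le _ _
      _ ≤ ‖(T i).adjoint * (star C * C)‖ * M := by gcongr; exact hM i
  have hlim := squeeze_zero (fun i => by positivity) hsq (by simpa using hadj.mul_const M)
  simpa [Real.sqrt_sq] using hlim.sqrt

end Compact

theorem exists_monotone_dist_lt {X : Type*} [PseudoMetricSpace X] {g : unitInterval → X}
    (hg : Continuous g) {ε : ℝ} (hε : 0 < ε) :
    ∃ τ : ℕ → unitInterval, Monotone τ ∧ τ 0 = 0 ∧ (∃ n, τ n = 1) ∧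
      ∀ j, dist (g (τ (j + 1))) (g (τ j)) < ε := by
  obtain ⟨τ, h0, hτ, ⟨n, hn⟩, hcover⟩ := exists_monotone_Icc_subset_open_cover_unitInterval
    (c := fun x => g ⁻¹' Metric.ball x (ε / 2)) (fun x => Metric.isOpen_ball.preimage hg)
    (fun s _ => mem_iUnion.2 ⟨g s, Metric.mem_ball_self (half_pos hε)⟩)
  refine ⟨τ, hτ, h0, ⟨n, hn n le_rfl⟩, fun j => ?_⟩
  obtain ⟨x, hx⟩ := hcover j
  have hle := hτ j.le_succ
  have h₁ : dist (g (τ (j + 1))) x < ε / 2 := hx (right_mem_Icc.2 hle)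
  have h₂ : dist (g (τ j)) x < ε / 2 := hx (left_mem_Icc.2 hle)
  linarith [dist_triangle_right (g (τ (j + 1))) (g (τ j)) x]

theorem re_inner_map_add_self {𝕜 E : Type*} [RCLike 𝕜] [NormedAddCommGroup E]
    [InnerProductSpace 𝕜 E] [CompleteSpace E] {K : E →L[𝕜] E} (hK : IsSelfAdjoint K) (x y : E) :
    RCLike.re (inner 𝕜 (K (x + y)) (x + y)) = RCLike.re (inner 𝕜 (K x) x) +
      2 * RCLike.re (inner 𝕜 (K y) x) + RCLike.re (inner 𝕜 (K y) y) := by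
  have hsymm : RCLike.re (inner 𝕜 (K x) y) = RCLike.re (inner 𝕜 (K y) x) := by
    rw [← inner_re_symm (𝕜 := 𝕜) y]
    exact congrArg _ (hK.isSymmetric y x).symm
  simp only [map_add, inner_add_left, inner_add_right, hsymm]
  ring

namespace ContinuousNest

open unitInterval

variable {𝒩 : ContinuousNest H} {K : H →L[ℂ] H} {τ : ℕ → I} {n : ℕ} {η : ℝ}

theorem norm_N_sub_N_apply_sq {s t : I} (hst : s ≤ t) (y : H) :
    ‖(𝒩.N t - 𝒩.N s) y‖ ^ 2 = ‖𝒩.N t y‖ ^ 2 - ‖𝒩.N s y‖ ^ 2 := by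
  have horth : 𝒩.N s * (𝒩.N t - 𝒩.N s) = 0 := by simp [mul_sub, N_mul_N, hst]
  rw [eq_sub_iff_add_eq', ← norm_add_sq_of_mul_eq_zero (𝒩.selfAdjoint s s.2) horth, sub_apply,
    add_sub_cancel]

theorem continuous_N_mul (hK : IsCompactOperator K) : Continuous fun t : I => 𝒩.N t * K := by
  refine continuous_iff_continuousAt.2 fun t => tendsto_iff_norm_sub_tendsto_zero.2 ?_
  have hbound : ∀ u : I, ‖𝒩.N u - 𝒩.N t‖ ≤ 1 + 1 := fun u =>
    (norm_sub_le _ _).trans (add_le_add (𝒩.norm_N_le u) (𝒩.norm_N_le t))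
  have hstrong : ∀ x, Tendsto (fun u : I => (𝒩.N u - 𝒩.N t) x) (𝓝 t) (𝓝 0) := fun x => by
    have hx := (continuousOn_iff_continuous_domRestrict.1 (𝒩.contOn x)).tendsto t
    simpa using hx.sub_const (𝒩.N t x)
  exact (tendsto_norm_comp_of_isCompactOperator hbound hstrong hK).congr fun u => by
    rw [← sub_mul]; rfl

/-- The triangular truncation of an operator along a partition `τ 0 ≤ ⋯ ≤ τ n` of `[0, 1]`: the
part of its block matrix that lies strictly above the diagonal. -/
noncomputable def truncation (𝒩 : ContinuousNest H) (τ : ℕ → I) (n : ℕ) (K : H →L[ℂ] H) :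
    H →L[ℂ] H :=
  ∑ j ∈ Finset.range n, 𝒩.N (τ j) * K * (𝒩.N (τ (j + 1)) - 𝒩.N (τ j))

theorem truncation_mem_nestAlgebra (hτ : Monotone τ) (n : ℕ) (K : H →L[ℂ] H) :
    𝒩.truncation τ n K ∈ 𝒩.nestAlgebra := by
  refine sum_mem fun j _ => ?_
  have hblock : 𝒩.N (τ (j + 1)) - 𝒩.N (τ j) = 𝒩.N (τ (j + 1)) * (1 - 𝒩.N (τ j)) := by
    simp [mul_sub, N_mul_N, hτ j.le_succ]
  rw [hblock, mul_assoc, ← mul_assoc K, ← mul_assoc]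
  exact 𝒩.N_mul_mul_one_sub_N_mem le_rfl _

theorem isCompactOperator_truncation (hK : IsCompactOperator K) :
    IsCompactOperator (𝒩.truncation τ n K) :=
  (compactOperator (RingHom.id ℂ) H H).sum_mem fun _ _ => (hK.clm_comp _).comp_clm _

theorem re_inner_N_mul_mul_apply {s t : I} (hst : s ≤ t) (hK : IsSelfAdjoint K) (y : H) :
    2 * (inner ℂ ((𝒩.N s * K * (𝒩.N t - 𝒩.N s)) y) y).re =
      (inner ℂ (K (𝒩.N t y)) (𝒩.N t y)).re - (inner ℂ (K (𝒩.N s y)) (𝒩.N s y)).re -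
        (inner ℂ (((𝒩.N t - 𝒩.N s) * K) ((𝒩.N t - 𝒩.N s) y)) ((𝒩.N t - 𝒩.N s) y)).re := by
  have hΔ := 𝒩.isStarProjection_N_sub_N hst
  have hadd := re_inner_map_add_self hK (𝒩.N s y) ((𝒩.N t - 𝒩.N s) y)
  rw [sub_apply, add_sub_cancel, ← sub_apply] at hadd
  have hs := (𝒩.isStarProjection_N s).isSelfAdjoint.isSymmetric (K ((𝒩.N t - 𝒩.N s) y)) y
  have ht := hΔ.isSelfAdjoint.isSymmetric (K ((𝒩.N t - 𝒩.N s) y)) ((𝒩.N t - 𝒩.N s) y)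
  have hidem : (𝒩.N t - 𝒩.N s) ((𝒩.N t - 𝒩.N s) y) = (𝒩.N t - 𝒩.N s) y :=
    congrArg (· y) hΔ.isIdempotentElem.eq
  simp only [ContinuousLinearMap.coe_coe] at hs ht
  simp only [RCLike.re_eq_complex_re] at hadd
  rw [mul_apply_eq_comp, mul_apply_eq_comp, mul_apply_eq_comp, hs, ht, hidem, hadd]
  ring

theorem le_re_inner_truncation_apply (hτ : Monotone τ) (h0 : τ 0 = 0) (hn : τ n = 1)
    (hK : IsSelfAdjoint K) (hη : ∀ j, ‖(𝒩.N (τ (j + 1)) - 𝒩.N (τ j)) * K‖ ≤ η) (y : H) :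
    (inner ℂ (K y) y).re - η * ‖y‖ ^ 2 ≤ 2 * (inner ℂ (𝒩.truncation τ n K y) y).re := by
  set F : ℕ → ℝ := fun j =>
    (inner ℂ (K (𝒩.N (τ j) y)) (𝒩.N (τ j) y)).re - η * ‖𝒩.N (τ j) y‖ ^ 2 with hF
  have hstep : ∀ j, F (j + 1) - F j ≤
      2 * (inner ℂ ((𝒩.N (τ j) * K * (𝒩.N (τ (j + 1)) - 𝒩.N (τ j))) y) y).re := fun j => by
    have hnorm := norm_N_sub_N_apply_sq (𝒩 := 𝒩) (hτ j.le_succ) y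
    rw [re_inner_N_mul_mul_apply (hτ j.le_succ) hK, hF]
    set z := (𝒩.N (τ (j + 1)) - 𝒩.N (τ j)) y
    set D := (𝒩.N (τ (j + 1)) - 𝒩.N (τ j)) * K
    have herror : (inner ℂ (D z) z).re ≤ η * ‖z‖ ^ 2 :=
      calc (inner ℂ (D z) z).re ≤ ‖D z‖ * ‖z‖ := re_inner_le_norm (𝕜 := ℂ) _ _
        _ ≤ η * ‖z‖ * ‖z‖ := by gcongr; exact D.le_of_opNorm_le (hη j) z
        _ = η * ‖z‖ ^ 2 := by ring
    rw [hnorm] at herror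
    linarith
  have hFn : F n = (inner ℂ (K y) y).re - η * ‖y‖ ^ 2 := by simp [hF, hn, 𝒩.N_one]
  have hF0 : F 0 = 0 := by simp [hF, h0, 𝒩.N_zero]
  calc (inner ℂ (K y) y).re - η * ‖y‖ ^ 2 = ∑ j ∈ Finset.range n, (F (j + 1) - F j) := by
        rw [Finset.sum_range_sub, hFn, hF0, sub_zero]
    _ ≤ ∑ j ∈ Finset.range n,
        2 * (inner ℂ ((𝒩.N (τ j) * K * (𝒩.N (τ (j + 1)) - 𝒩.N (τ j))) y) y).re :=
      Finset.sum_le_sum fun j _ => hstep j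
    _ = 2 * (inner ℂ (𝒩.truncation τ n K y) y).re := by
      rw [truncation, sum_apply, sum_inner, Complex.re_sum, Finset.mul_sum]

variable (𝒩) in
theorem exists_compact_mem_nestAlgebra_le_re_inner (hK : IsSelfAdjoint K)
    (hKc : IsCompactOperator K) (hη : 0 < η) : ∃ V ∈ 𝒩.nestAlgebra, IsCompactOperator V ∧
      ∀ y, (inner ℂ (K y) y).re / 2 - η * ‖y‖ ^ 2 ≤ (inner ℂ (V y) y).re := by
  obtain ⟨τ, hτ, h0, ⟨n, hn⟩, hdist⟩ :=
    exists_monotone_dist_lt (𝒩.continuous_N_mul hKc) (mul_pos two_pos hη)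
  refine ⟨𝒩.truncation τ n K, truncation_mem_nestAlgebra hτ n K, isCompactOperator_truncation hKc,
    fun y => ?_⟩
  have hsmall : ∀ j, ‖(𝒩.N (τ (j + 1)) - 𝒩.N (τ j)) * K‖ ≤ 2 * η := fun j => by
    simpa only [sub_mul, dist_eq_norm] using (hdist j).le
  linarith [le_re_inner_truncation_apply hτ h0 hn hK hsmall y]

end ContinuousNest

section ColumnBound

variable {𝕜 E F : Type*} [RCLike 𝕜] [NormedAddCommGroup E] [InnerProductSpace 𝕜 E]
  [NormedAddCommGroup F] [NormedSpace 𝕜 F]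

/-- The column operator `x ↦ (g x, h x)`, with values in the Hilbert sum of two copies of the
target space, has norm at most `√c`. -/
def ColumnBound (g h : E →L[𝕜] F) (c : ℝ) : Prop :=
  ∀ x, ‖g x‖ ^ 2 + ‖h x‖ ^ 2 ≤ c * ‖x‖ ^ 2

theorem ColumnBound.mono {g h : E →L[𝕜] F} {c c' : ℝ} (hgh : ColumnBound g h c) (hc : c ≤ c') :
    ColumnBound g h c' :=
  fun x => (hgh x).trans (by gcongr)

theorem ColumnBound.norm_right_le {g h : E →L[𝕜] F} {M : ℝ} (hM : 0 ≤ M)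
    (hgh : ColumnBound g h (M ^ 2)) : ‖h‖ ≤ M :=
  h.opNorm_le_bound hM fun x => le_of_sq_le_sq
    (by rw [mul_pow]; linarith [hgh x, sq_nonneg ‖g x‖]) (by positivity)

theorem tendsto_zero_of_columnBound {L R : ℕ → E →L[𝕜] F}
    (hcol : ∀ m, ColumnBound (L m) (R m) (1 + 1 / ((m : ℝ) + 1))) {d : ℕ → E} (hd : DenseRange d)
    (hR : ∀ m, ∀ k < m, ‖R m (d k)‖ ^ 2 ≤ 1 / ((m : ℝ) + 1)) (x : E) :
    Tendsto (fun m => R m x) atTop (𝓝 0) := by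
  have hone : ∀ m : ℕ, 1 / ((m : ℝ) + 1) ≤ 1 := fun m =>
    div_le_one_of_le₀ (by linarith [m.cast_nonneg (α := ℝ)]) (by positivity)
  refine tendsto_zero_of_denseRange (M := 2) (fun m => ?_) hd (fun k => ?_) x
  · exact ((hcol m).mono (by linarith [hone m])).norm_right_le zero_le_two
  · have hsq : Tendsto (fun m => ‖R m (d k)‖ ^ 2) atTop (𝓝 0) :=
      squeeze_zero' (Eventually.of_forall fun _ => by positivity)
        ((eventually_gt_atTop k).mono fun m hm => hR m k hm) tendsto_one_div_add_atTop_nhds_zero_nat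
    exact tendsto_zero_iff_norm_tendsto_zero.2 (by simpa [Real.sqrt_sq] using hsq.sqrt)

theorem columnBound_of_mul_eq_one {V W : E →L[𝕜] E} {δ : ℝ} (hδ₀ : 0 ≤ δ) (hδ₁ : δ ≤ 1)
    (hV : ∀ y, -(δ ^ 2 / 4 * ‖y‖ ^ 2) ≤ RCLike.re (inner 𝕜 (V y) y))
    (hW : (V + (δ : 𝕜) • 1) * W = 1) :
    ColumnBound (1 - (δ : 𝕜) • W) ((δ : 𝕜) • W) (1 + δ) := by
  intro x
  have hx : V (W x) + (δ : 𝕜) • W x = x := congrArg (· x) hW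
  have hVW : (1 - (δ : 𝕜) • W) x = V (W x) := sub_eq_of_eq_add hx.symm
  rw [hVW, smul_apply]
  simpa only [hx] using norm_sq_add_norm_smul_sq_le hδ₀ hδ₁ (hV (W x))

theorem norm_smul_apply_sq_le_of_mul_eq_one {V W : E →L[𝕜] E} {δ : ℝ} (hδ₀ : 0 ≤ δ) (hδ₁ : δ ≤ 1)
    {f : E} (hV : ∀ y, ‖inner 𝕜 f y‖ ^ 2 / 2 - δ ^ 2 / 4 * ‖y‖ ^ 2 ≤ RCLike.re (inner 𝕜 (V y) y))
    (hW : (V + (δ : 𝕜) • 1) * W = 1) : ‖((δ : 𝕜) • W) f‖ ^ 2 ≤ δ := by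
  have hf : V (W f) + (δ : 𝕜) • W f = f := congrArg (· f) hW
  refine norm_smul_sq_le_of_norm_inner_sq_le (v := V (W f)) (y := W f) hδ₀ hδ₁ ?_
  rw [hf]
  exact hV (W f)

theorem le_norm_inner_add_smul_one_apply {V : E →L[𝕜] E} {δ : ℝ} (hδ₀ : 0 ≤ δ) (hδ₁ : δ ≤ 1)
    (hV : ∀ y, -(δ ^ 2 / 4 * ‖y‖ ^ 2) ≤ RCLike.re (inner 𝕜 (V y) y)) (y : E) :
    δ / 2 * ‖y‖ ^ 2 ≤ ‖inner 𝕜 ((V + (δ : 𝕜) • 1) y) y‖ := by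
  have hexpand : RCLike.re (inner 𝕜 ((V + (δ : 𝕜) • 1) y) y) =
      RCLike.re (inner 𝕜 (V y) y) + δ * ‖y‖ ^ 2 := by
    rw [add_apply, smul_apply, one_apply_eq_self, inner_add_left, inner_smul_left, map_add,
      RCLike.conj_ofReal, RCLike.re_ofReal_mul, inner_self_eq_norm_sq]
  refine le_trans ?_ (RCLike.re_le_norm _)
  nlinarith [hV y, mul_nonneg (mul_nonneg hδ₀ (sub_nonneg.2 hδ₁)) (sq_nonneg ‖y‖)]

theorem exists_mul_eq_one_of_coercive [CompleteSpace E] {T : E →L[𝕜] E} {c : ℝ} (hc : 0 < c)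
    (hT : ∀ x, c * ‖x‖ ^ 2 ≤ ‖inner 𝕜 (T x) x‖) : ∃ W, T * W = 1 ∧ W * T = 1 := by
  obtain ⟨u, rfl⟩ := T.isUnit_of_forall_le_norm_inner_map (c := ⟨c, hc.le⟩) hc fun x => by
    rw [mul_comm]; exact hT x
  exact ⟨↑u⁻¹, u.mul_inv, u.inv_mul⟩

end ColumnBound

section SumRankOne

variable {𝕜 E : Type*} [RCLike 𝕜] [NormedAddCommGroup E] [InnerProductSpace 𝕜 E]

theorem exists_isSelfAdjoint_isCompactOperator_re_inner_eq_sum [CompleteSpace E] (S : Finset E) :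
    ∃ K : E →L[𝕜] E, IsSelfAdjoint K ∧ IsCompactOperator K ∧
      ∀ y, RCLike.re (inner 𝕜 (K y) y) = ∑ f ∈ S, ‖inner 𝕜 f y‖ ^ 2 := by
  refine ⟨∑ f ∈ S, InnerProductSpace.rankOne 𝕜 f f, ?_, ?_, fun y => ?_⟩
  · exact isSelfAdjoint_sum _ fun f _ => (InnerProductSpace.isPositive_rankOne_self f).isSelfAdjoint
  · refine (compactOperator (RingHom.id 𝕜) E E).sum_mem fun f _ => ?_
    exact (isCompactOperator_of_locallyCompactSpace_rng
      (ContinuousLinearMap.toSpanSingleton 𝕜 f)).comp_clm (innerSL 𝕜 f)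
  · simp only [sum_apply, sum_inner, map_sum, InnerProductSpace.rankOne_apply, inner_smul_left,
      RCLike.conj_mul]
    norm_cast

end SumRankOne

/-- A sequence `G` of compact operators in the nest algebra of `𝒩` which tends to the identity, in
such a way that both the columns `(G m, 1 - G m)` and the columns `((G m)⋆, 1 - (G m)⋆)` have
norms tending to `1`. -/
structure ContinuousNest.IsTriangularApproximateUnit (𝒩 : ContinuousNest H)
    (G : ℕ → H →L[ℂ] H) : Prop where
  mem m : G m ∈ 𝒩.nestAlgebra
  isCompactOperator m : IsCompactOperator (G m)
  columnBound m : ColumnBound (G m) (1 - G m) (1 + 1 / ((m : ℝ) + 1))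
  columnBound_star m : ColumnBound (star (G m)) (1 - star (G m)) (1 + 1 / ((m : ℝ) + 1))
  tendsto_one_sub x : Tendsto (fun m => (1 - G m) x) atTop (𝓝 0)
  tendsto_one_sub_star x : Tendsto (fun m => (1 - star (G m)) x) atTop (𝓝 0)

namespace ContinuousNest

variable {𝒩 : ContinuousNest H} {δ : ℝ}

theorem inv_mem_nestAlgebra_of_coercive {T W : H →L[ℂ] H} (hT : T ∈ 𝒩.nestAlgebra)
    (hδ : 0 < δ) (hcoercive : ∀ x, δ * ‖x‖ ^ 2 ≤ ‖inner ℂ (T x) x‖) (hTW : T * W = 1) :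
    W ∈ 𝒩.nestAlgebra :=
  𝒩.mem_alg_iff.2 fun t =>
    mul_eq_mul_mul_of_coercive (𝒩.isStarProjection_N t) hδ hcoercive (𝒩.mem_alg_iff.1 hT t) hTW

theorem exists_compact_mem_nestAlgebra_norm_inner_sq_le (𝒩 : ContinuousNest H) (S : Finset H)
    {η : ℝ} (hη : 0 < η) : ∃ V ∈ 𝒩.nestAlgebra, IsCompactOperator V ∧
      (∀ y, -(η * ‖y‖ ^ 2) ≤ (inner ℂ (V y) y).re) ∧
      ∀ f ∈ S, ∀ y, ‖inner ℂ f y‖ ^ 2 / 2 - η * ‖y‖ ^ 2 ≤ (inner ℂ (V y) y).re := by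
  obtain ⟨K, hK, hKc, hKS⟩ := exists_isSelfAdjoint_isCompactOperator_re_inner_eq_sum (𝕜 := ℂ) S
  obtain ⟨V, hV, hVc, hKV⟩ := 𝒩.exists_compact_mem_nestAlgebra_le_re_inner hK hKc hη
  simp only [RCLike.re_eq_complex_re] at hKS
  refine ⟨V, hV, hVc, fun y => ?_, fun f hf y => ?_⟩
  · have : 0 ≤ (inner ℂ (K y) y).re := (hKS y).symm ▸ by positivity
    linarith [hKV y]
  · have : ‖inner ℂ f y‖ ^ 2 ≤ (inner ℂ (K y) y).re := (hKS y).symm ▸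
      Finset.single_le_sum (f := fun f => ‖inner ℂ f y‖ ^ 2) (fun _ _ => by positivity) hf
    linarith [hKV y]

theorem exists_compact_columnBound (𝒩 : ContinuousNest H) (S : Finset H) (hδ₀ : 0 < δ)
    (hδ₁ : δ ≤ 1) : ∃ G ∈ 𝒩.nestAlgebra, IsCompactOperator G ∧
      (ColumnBound G (1 - G) (1 + δ) ∧ ∀ f ∈ S, ‖(1 - G) f‖ ^ 2 ≤ δ) ∧
      ColumnBound (star G) (1 - star G) (1 + δ) ∧ ∀ f ∈ S, ‖(1 - star G) f‖ ^ 2 ≤ δ := by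
  obtain ⟨V, hV, hVc, hform, hformS⟩ :=
    𝒩.exists_compact_mem_nestAlgebra_norm_inner_sq_le S (η := δ ^ 2 / 4) (by positivity)
  have hre : ∀ y, (inner ℂ (V y) y).re = (inner ℂ (star V y) y).re := fun y => by
    rw [ContinuousLinearMap.star_eq_adjoint, ContinuousLinearMap.adjoint_inner_left]
    exact inner_re_symm (𝕜 := ℂ) _ _
  have hcoercive := le_norm_inner_add_smul_one_apply (V := V) hδ₀.le hδ₁ hform
  obtain ⟨W, hVW, hWV⟩ := exists_mul_eq_one_of_coercive (half_pos hδ₀) hcoercive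
  have hVW_star : (star V + (δ : ℂ) • 1) * star W = 1 := by simpa using congrArg star hWV
  have hG : 1 - (δ : ℂ) • W = V * W := by
    rw [← hVW, add_mul, smul_mul_assoc, one_mul]
    exact add_sub_cancel_right _ _
  have hG_star : star (1 - (δ : ℂ) • W) = 1 - (δ : ℂ) • star W := by simp
  have hW : W ∈ 𝒩.nestAlgebra := inv_mem_nestAlgebra_of_coercive
    (add_mem hV (Subalgebra.smul_mem _ (one_mem _) _)) (half_pos hδ₀) hcoercive hVW
  refine ⟨1 - (δ : ℂ) • W, sub_mem (one_mem _) (Subalgebra.smul_mem _ hW _),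
    hG ▸ hVc.comp_clm W, ?_⟩
  rw [hG_star, sub_sub_cancel, sub_sub_cancel]
  refine ⟨⟨columnBound_of_mul_eq_one hδ₀.le hδ₁ hform hVW, fun f hf =>
    norm_smul_apply_sq_le_of_mul_eq_one hδ₀.le hδ₁ (hformS f hf) hVW⟩, ?_⟩
  simp only [hre] at hform hformS
  exact ⟨columnBound_of_mul_eq_one hδ₀.le hδ₁ hform hVW_star, fun f hf =>
    norm_smul_apply_sq_le_of_mul_eq_one hδ₀.le hδ₁ (hformS f hf) hVW_star⟩

theorem exists_isTriangularApproximateUnit [TopologicalSpace.SeparableSpace H]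
    (𝒩 : ContinuousNest H) : ∃ G, 𝒩.IsTriangularApproximateUnit G := by
  classical
  let d := TopologicalSpace.denseSeq H
  have hd : DenseRange d := TopologicalSpace.denseRange_denseSeq H
  have hmem : ∀ {m k}, k < m → d k ∈ (Finset.range m).image d := fun hk =>
    Finset.mem_image_of_mem d (Finset.mem_range.2 hk)
  choose G hG hGc hcol hcol_star using fun m : ℕ =>
    𝒩.exists_compact_columnBound ((Finset.range m).image d) (δ := 1 / ((m : ℝ) + 1))
      (by positivity)
      (div_le_one_of_le₀ (by linarith [m.cast_nonneg (α := ℝ)]) (by positivity))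
  exact ⟨G, hG, hGc, fun m => (hcol m).1, fun m => (hcol_star m).1,
    tendsto_zero_of_columnBound (fun m => (hcol m).1) hd fun m k hk => (hcol m).2 _ (hmem hk),
    tendsto_zero_of_columnBound (fun m => (hcol_star m).1) hd
      fun m k hk => (hcol_star m).2 _ (hmem hk)⟩

end ContinuousNest

/-! ### Gluing operators with prescribed corners -/

section ColumnBound

variable {𝕜 E : Type*} [RCLike 𝕜] [NormedAddCommGroup E] [InnerProductSpace 𝕜 E]

theorem norm_mul_add_mul_le_of_columnBound [CompleteSpace E] {P₁ P₂ Q₁ Q₂ A B : E →L[𝕜] E}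
    {ρ c : ℝ} (hc : 0 ≤ c) (hA : ‖A‖ ≤ ρ) (hB : ‖B‖ ≤ ρ)
    (hrow : ColumnBound (star P₁) (star P₂) c) (hcol : ColumnBound Q₁ Q₂ c) :
    ‖P₁ * A * Q₁ + P₂ * B * Q₂‖ ≤ ρ * c := by
  have hρ : 0 ≤ ρ := (norm_nonneg A).trans hA
  refine ContinuousLinearMap.opNorm_le_of_re_inner_le (by positivity) fun x z hx hz => ?_
  have hinner : RCLike.re (inner 𝕜 ((P₁ * A * Q₁ + P₂ * B * Q₂) x) z) =
      RCLike.re (inner 𝕜 (A (Q₁ x)) (star P₁ z)) +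
        RCLike.re (inner 𝕜 (B (Q₂ x)) (star P₂ z)) := by
    rw [ContinuousLinearMap.star_eq_adjoint, ContinuousLinearMap.star_eq_adjoint,
      ContinuousLinearMap.adjoint_inner_right, ContinuousLinearMap.adjoint_inner_right, ← map_add,
      ← inner_add_left]
    rfl
  have hbound : ∀ {D : E →L[𝕜] E} {q p : E}, ‖D‖ ≤ ρ →
      RCLike.re (inner 𝕜 (D q) p) ≤ ρ * ((‖q‖ ^ 2 + ‖p‖ ^ 2) / 2) := fun {D q p} hD =>
    calc RCLike.re (inner 𝕜 (D q) p) ≤ ρ * ‖q‖ * ‖p‖ :=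
          (re_inner_le_norm _ _).trans (by gcongr; exact D.le_of_opNorm_le hD q)
      _ ≤ ρ * ((‖q‖ ^ 2 + ‖p‖ ^ 2) / 2) := by
        rw [mul_assoc]
        gcongr
        linarith [two_mul_le_add_sq ‖q‖ ‖p‖]
  have hx := hcol x
  have hz := hrow z
  simp only [*, one_pow, mul_one] at hx hz
  rw [hinner]
  nlinarith [hbound hA (q := Q₁ x) (p := star P₁ z), hbound hB (q := Q₂ x) (p := star P₂ z)]

theorem ColumnBound.of_norm_mul_one_sub_le {g k : E →L[𝕜] E} {θ : ℝ} (hθ₀ : 0 ≤ θ) (hθ₁ : θ ≤ 1)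
    (hk : ColumnBound k (1 - k) (1 + θ)) (hg : ColumnBound g (1 - g) (1 + θ))
    (hkg : ‖k * (1 - g)‖ ≤ θ) : ColumnBound k (1 - g) (1 + 22 * θ) := by
  intro x
  have hkgx : ‖k (g x)‖ ≤ (1 + θ) * ‖g x‖ := by
    refine le_of_sq_le_sq ?_ (by positivity)
    nlinarith [hk (g x), sq_nonneg ‖(1 - k) (g x)‖,
      mul_nonneg (mul_nonneg hθ₀ (add_nonneg zero_le_one hθ₀)) (sq_nonneg ‖g x‖)]
  have hgx : ‖g x‖ ≤ 2 * ‖x‖ := by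
    refine le_of_sq_le_sq ?_ (by positivity)
    nlinarith [hg x, sq_nonneg ‖(1 - g) x‖, sq_nonneg ‖x‖]
  have hkx : ‖k x‖ ≤ ‖g x‖ + 3 * θ * ‖x‖ :=
    calc ‖k x‖ = ‖k (g x) + (k * (1 - g)) x‖ := by simp
      _ ≤ (1 + θ) * ‖g x‖ + θ * ‖x‖ :=
        norm_add_le_of_le hkgx (ContinuousLinearMap.le_of_opNorm_le _ hkg x)
      _ ≤ ‖g x‖ + 3 * θ * ‖x‖ := by nlinarith
  calc ‖k x‖ ^ 2 + ‖(1 - g) x‖ ^ 2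
      ≤ (‖g x‖ + 3 * θ * ‖x‖) ^ 2 + ‖(1 - g) x‖ ^ 2 := by gcongr
    _ = ‖g x‖ ^ 2 + ‖(1 - g) x‖ ^ 2 + 6 * (θ * (‖g x‖ * ‖x‖)) + 9 * (θ * (θ * ‖x‖ ^ 2)) := by ring
    _ ≤ (1 + θ) * ‖x‖ ^ 2 + 6 * (θ * (2 * ‖x‖ * ‖x‖)) + 9 * (θ * (1 * ‖x‖ ^ 2)) := by
      gcongr
      exact hg x
    _ = (1 + 22 * θ) * ‖x‖ ^ 2 := by ring

end ColumnBound

theorem exists_seq_of_eventually_eventually {α : Type*} {l : Filter α} [l.NeBot] {p : α → Prop}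
    {r : α → α → Prop} (hp : ∀ᶠ a in l, p a) (hr : ∀ᶠ a in l, ∀ᶠ b in l, r a b) :
    ∃ k : ℕ → α, (∀ i, p (k i)) ∧ ∀ i, r (k i) (k (i + 1)) := by
  obtain ⟨k, hk, hkr⟩ := exists_seq_of_forall_finset_exists (fun a => p a ∧ ∀ᶠ b in l, r a b) r
    fun s hs => ((hp.and hr).and
      ((Filter.eventually_all_finset s).2 fun a ha => (hs a ha).2)).exists
  exact ⟨k, fun i => (hk i).1, fun i => hkr i _ i.lt_succ_self⟩

theorem sum_range_mul_add_mul_one_sub {R : Type*} [Ring R] (a b : R) (g : ℕ → R) (n : ℕ) :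
    a * ∑ i ∈ Finset.range n, g i + b * ∑ i ∈ Finset.range n, (1 - g i) =
      ∑ i ∈ Finset.range n, (a * g i + b * (1 - g (i + 1))) + b * (g n - g 0) := by
  rw [← Finset.sum_range_sub g]
  simp only [Finset.mul_sum, ← Finset.sum_add_distrib]
  exact Finset.sum_congr rfl fun i _ => by noncomm_ring

namespace ContinuousNest.IsTriangularApproximateUnit

variable {𝒩 : ContinuousNest H} {G : ℕ → H →L[ℂ] H}

theorem norm_one_sub_le (hG : 𝒩.IsTriangularApproximateUnit G) (m : ℕ) :
    ‖1 - G m‖ ≤ 1 + 1 / ((m : ℝ) + 1) := by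
  have hθ : 0 ≤ 1 / ((m : ℝ) + 1) := by positivity
  exact ((hG.columnBound m).mono (by nlinarith)).norm_right_le (by positivity)

theorem norm_one_sub_le_two (hG : 𝒩.IsTriangularApproximateUnit G) (m : ℕ) : ‖1 - G m‖ ≤ 2 :=
  (hG.norm_one_sub_le m).trans (by
    linarith [div_le_one_of_le₀ (a := 1) (b := (m : ℝ) + 1) (by simp) (by positivity)])

theorem tendsto_norm_one_sub_mul (hG : 𝒩.IsTriangularApproximateUnit G)
    {C : H →L[ℂ] H} (hC : IsCompactOperator C) :
    Tendsto (fun m => ‖(1 - G m) * C‖) atTop (𝓝 0) :=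
  tendsto_norm_comp_of_isCompactOperator hG.norm_one_sub_le_two hG.tendsto_one_sub hC

theorem tendsto_norm_mul_one_sub (hG : 𝒩.IsTriangularApproximateUnit G)
    {C : H →L[ℂ] H} (hC : IsCompactOperator C) :
    Tendsto (fun m => ‖C * (1 - G m)‖) atTop (𝓝 0) := by
  refine tendsto_norm_mul_of_isCompactOperator hG.norm_one_sub_le_two (fun x => ?_) hC
  simpa [← ContinuousLinearMap.star_eq_adjoint] using hG.tendsto_one_sub_star x

theorem eventually_columnBound (hG : 𝒩.IsTriangularApproximateUnit G) {θ : ℝ} (hθ : 0 < θ) :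
    ∀ᶠ m in atTop, ColumnBound (G m) (1 - G m) (1 + θ) ∧
      ColumnBound (star (G m)) (1 - star (G m)) (1 + θ) := by
  filter_upwards [tendsto_one_div_add_atTop_nhds_zero_nat.eventually_le_const hθ] with m hm
  exact ⟨(hG.columnBound m).mono (by gcongr), (hG.columnBound_star m).mono (by gcongr)⟩

theorem eventually_norm_mul_add_mul_one_sub_le (hG : 𝒩.IsTriangularApproximateUnit G)
    {A B : H →L[ℂ] H} {ρ θ : ℝ} (hA : ‖A‖ ≤ ρ) (hB : ‖B‖ ≤ ρ) (hθ₀ : 0 < θ)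
    (hθ₁ : θ ≤ 1) :
    ∀ᶠ k in atTop, ∀ᶠ m in atTop,
      ‖A * G k + B * (1 - G m)‖ ≤ ρ * (1 + 22 * θ) + θ + θ := by
  have hsmall {u : ℕ → ℝ} (hu : Tendsto u atTop (𝓝 0)) : ∀ᶠ m in atTop, u m ≤ θ :=
    hu.eventually_le_const hθ₀
  have hcol := hG.eventually_columnBound hθ₀
  filter_upwards [hcol] with k hk
  obtain ⟨k', hk', hk'A⟩ := (hcol.and (hsmall
    (hG.tendsto_norm_one_sub_mul (C := A * G k) ((hG.isCompactOperator k).clm_comp A)))).exists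
  obtain ⟨m', hm', hm'k'⟩ := (hcol.and (hsmall
    (hG.tendsto_norm_one_sub_mul (hG.isCompactOperator k')))).exists
  filter_upwards [hcol, hsmall (hG.tendsto_norm_mul_one_sub (hG.isCompactOperator k)),
    hsmall (hG.tendsto_norm_mul_one_sub (C := G m' * B)
      ((hG.isCompactOperator m').comp_clm B))] with m hm hkm hBm
  have hrow_km : ColumnBound (star (G k')) (star (1 - G m')) (1 + 22 * θ) := by
    rw [star_sub, star_one]
    refine hk'.2.of_norm_mul_one_sub_le hθ₀.le hθ₁ hm'.2 ?_
    rwa [← star_one (H →L[ℂ] H), ← star_sub, ← star_mul, norm_star]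
  have hmain : ‖G k' * A * G k + (1 - G m') * B * (1 - G m)‖ ≤ ρ * (1 + 22 * θ) :=
    norm_mul_add_mul_le_of_columnBound (by positivity) hA hB hrow_km
      (hk.1.of_norm_mul_one_sub_le hθ₀.le hθ₁ hm.1 hkm)
  have hsplit : A * G k + B * (1 - G m) = G k' * A * G k + (1 - G m') * B * (1 - G m) +
      (1 - G k') * (A * G k) + G m' * B * (1 - G m) := by noncomm_ring
  rw [hsplit]
  exact norm_add_le_of_le (norm_add_le_of_le hmain hk'A) hBm

theorem exists_mem_norm_mul_add_mul_one_sub_lt (hG : 𝒩.IsTriangularApproximateUnit G)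
    {A B : H →L[ℂ] H} {ρ ε : ℝ} (hA : ‖A‖ ≤ ρ) (hB : ‖B‖ ≤ ρ) (hε : 0 < ε)
    {𝒞 : Set (H →L[ℂ] H)} (h𝒞 : Convex ℝ 𝒞)
    (hG𝒞 : ∀ᶠ m in atTop, G m ∈ 𝒞) : ∃ g ∈ 𝒞, ‖A * g + B * (1 - g)‖ < ρ + ε := by
  have hρ : 0 ≤ ρ := (norm_nonneg A).trans hA
  obtain ⟨θ, hθ₀, hθ₁, hθε⟩ : ∃ θ > 0, θ ≤ 1 ∧ ρ * (1 + 22 * θ) + θ + θ ≤ ρ + ε / 2 := by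
    refine ⟨min 1 (ε / 2 / (22 * ρ + 2)), by positivity, min_le_left _ _, ?_⟩
    have h := (le_div_iff₀ (by positivity)).1 (min_le_right 1 (ε / 2 / (22 * ρ + 2)))
    linarith
  obtain ⟨k, hk, hkk⟩ := exists_seq_of_eventually_eventually hG𝒞
    (hG.eventually_norm_mul_add_mul_one_sub_le hA hB hθ₀ hθ₁)
  obtain ⟨n, hn⟩ := exists_nat_gt (4 * ρ / (ε / 2))
  have hn₀ : (0 : ℝ) < n := lt_of_le_of_lt (by positivity) hn
  refine ⟨∑ i ∈ Finset.range n, (n : ℝ)⁻¹ • G (k i), h𝒞.sum_mem (fun _ _ => by positivity)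
    (by simp [hn₀.ne']) fun i _ => hk i, ?_⟩
  have htelescope : (n : ℝ) • (A * ∑ i ∈ Finset.range n, (n : ℝ)⁻¹ • G (k i) +
      B * (1 - ∑ i ∈ Finset.range n, (n : ℝ)⁻¹ • G (k i))) =
      ∑ i ∈ Finset.range n, (A * G (k i) + B * (1 - G (k (i + 1)))) +
        B * (G (k n) - G (k 0)) := by
    rw [← sum_range_mul_add_mul_one_sub, ← Finset.smul_sum, smul_add, ← mul_smul_comm,
      ← mul_smul_comm, smul_sub, smul_inv_smul₀ hn₀.ne', Finset.sum_sub_distrib]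
    simp [Nat.cast_smul_eq_nsmul]
  have hends : ‖G (k n) - G (k 0)‖ ≤ 4 := by
    rw [← sub_sub_sub_cancel_left _ _ (1 : H →L[ℂ] H)]
    linarith [norm_sub_le (1 - G (k 0)) (1 - G (k n)), hG.norm_one_sub_le_two (k 0),
      hG.norm_one_sub_le_two (k n)]
  refine lt_of_mul_lt_mul_left (a := (n : ℝ)) ?_ hn₀.le
  rw [← norm_smul_of_nonneg hn₀.le, htelescope]
  calc _ ≤ n * (ρ + ε / 2) + ρ * 4 := by
        refine norm_add_le_of_le ((norm_sum_le_of_le _ fun i _ => (hkk i).trans hθε).trans ?_)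
          (norm_mul_le_of_le hB hends)
        rw [Finset.sum_const, Finset.card_range, nsmul_eq_mul]
    _ < n * (ρ + ε) := by linarith [(div_lt_iff₀ (half_pos hε)).1 hn]

end ContinuousNest.IsTriangularApproximateUnit

section StrongLimit

variable {𝕜 E F : Type*} [RCLike 𝕜] [NormedAddCommGroup E] [NormedSpace 𝕜 E] [CompleteSpace E]
  [NormedAddCommGroup F] [NormedSpace 𝕜 F]

theorem cauchySeq_of_norm_sub_le_half_pow {u : ℕ → F} {k : ℕ}
    (hu : ∀ n, k ≤ n → ‖u (n + 1) - u n‖ ≤ (1 / 2) ^ n) : CauchySeq u := by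
  rw [← cauchySeq_shift k]
  refine cauchySeq_of_le_geometric (1 / 2) 1 (by norm_num) fun n => ?_
  rw [dist_comm, dist_eq_norm, add_right_comm, one_mul]
  exact (hu (n + k) (Nat.le_add_left k n)).trans
    (pow_le_pow_of_le_one (by norm_num) (by norm_num) (Nat.le_add_right n k))

theorem exists_tendsto_apply_of_denseRange [CompleteSpace F] {T : ℕ → E →L[𝕜] F} {M : ℝ}
    (hM : ∀ n, ‖T n‖ ≤ M) {ι : Type*} {d : ι → E} (hd : DenseRange d)
    (h : ∀ i, CauchySeq fun n => T n (d i)) :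
    ∃ W : E →L[𝕜] F, ‖W‖ ≤ M ∧ ∀ x, Tendsto (fun n => T n x) atTop (𝓝 (W x)) := by
  have hcauchy (x : E) : CauchySeq fun n => T n x := by
    have hsub (p : ℕ × ℕ) : ‖T p.1 - T p.2‖ ≤ M + M := norm_sub_le_of_le (hM p.1) (hM p.2)
    have hlim (i : ι) : Tendsto (fun p : ℕ × ℕ => (T p.1 - T p.2) (d i)) atTop (𝓝 0) := by
      rw [tendsto_zero_iff_norm_tendsto_zero]
      simpa [dist_eq_norm] using cauchySeq_iff_tendsto_dist_atTop_0.1 (h i)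
    rw [cauchySeq_iff_tendsto_dist_atTop_0]
    simpa [dist_eq_norm] using (tendsto_zero_of_denseRange hsub hd hlim x).norm
  choose f hf using fun x => cauchySeq_tendsto_of_complete (hcauchy x)
  refine ⟨continuousLinearMapOfTendsto T (tendsto_pi_nhds.2 hf), ?_, hf⟩
  exact ContinuousLinearMap.opNorm_le_bound _ ((norm_nonneg _).trans (hM 0)) fun x =>
    le_of_tendsto (hf x).norm (Eventually.of_forall fun n => (T n).le_of_opNorm_le (hM n) x)

end StrongLimit

namespace ContinuousNest

open unitInterval

theorem isCompactOperator_corner (𝒩 : ContinuousNest H) (s t : I) {K : H →L[ℂ] H}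
    (hK : IsCompactOperator K) : IsCompactOperator (𝒩.corner s t K) := by
  rw [corner_apply]
  exact (hK.clm_comp (1 - 𝒩.N s)).comp_clm (𝒩.N t)

namespace IsTriangularApproximateUnit

variable {𝒩 : ContinuousNest H} {G : ℕ → H →L[ℂ] H} {r ε : ℝ}

theorem eventually_norm_corner_mul_one_sub_lt (hG : 𝒩.IsTriangularApproximateUnit G)
    {X : H →L[ℂ] H} {s t : I} (hX : essNorm (𝒩.corner s t X) < r) :
    ∀ᶠ m in atTop, ‖𝒩.corner s t (X * (1 - G m))‖ < r := by
  obtain ⟨K, hK, hKr⟩ := exists_isCompactOperator_norm_sub_lt hX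
  have hlim := ((tendsto_one_div_add_atTop_nhds_zero_nat.const_add (1 : ℝ)).const_mul
    ‖𝒩.corner s t X - K‖).add (hG.tendsto_norm_mul_one_sub hK)
  filter_upwards [hlim.eventually_lt_const (by simpa using hKr)] with m hm
  refine lt_of_le_of_lt ?_ hm
  rw [corner_mul (sub_mem (one_mem _) (hG.mem m))]
  calc ‖𝒩.corner s t X * (1 - G m) * 𝒩.N t‖ ≤ ‖𝒩.corner s t X * (1 - G m)‖ :=
        (norm_mul_le _ _).trans (mul_le_of_le_one_right (norm_nonneg _) (𝒩.norm_N_le t))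
    _ = ‖(𝒩.corner s t X - K) * (1 - G m) + K * (1 - G m)‖ := by rw [← add_mul, sub_add_cancel]
    _ ≤ ‖𝒩.corner s t X - K‖ * (1 + 1 / ((m : ℝ) + 1)) + ‖K * (1 - G m)‖ :=
      norm_add_le_of_le (norm_mul_le_of_le le_rfl (hG.norm_one_sub_le m)) le_rfl

theorem exists_norm_lt_isCompactOperator_corner_sub (hG : 𝒩.IsTriangularApproximateUnit G)
    (hr : 0 < r) {X : H →L[ℂ] H} (hX : X ∈ 𝒩.nestAlgebra) (S : Finset (I × I))
    (hS : ∀ p ∈ S, essNorm (𝒩.corner p.1 p.2 X) < r) :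
    ∃ Y ∈ 𝒩.nestAlgebra, ‖Y‖ < r ∧ ∀ p ∈ S, IsCompactOperator (𝒩.corner p.1 p.2 (X - Y)) := by
  obtain ⟨m, hm⟩ := ((eventually_all_finset S).2 fun p hp =>
    hG.eventually_norm_corner_mul_one_sub_lt (hS p hp)).exists
  obtain ⟨Y, hY, hYr, hYS⟩ := exists_mem_nestAlgebra_norm_lt_corner_eq hr
    (mul_mem hX (sub_mem (one_mem _) (hG.mem m))) S hm
  refine ⟨Y, hY, hYr, fun p hp => ?_⟩
  have hXY : 𝒩.corner p.1 p.2 (X - Y) = 𝒩.corner p.1 p.2 (X * G m) := by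
    rw [map_sub, hYS p hp, ← map_sub, mul_sub, mul_one, sub_sub_cancel]
  rw [hXY]
  exact 𝒩.isCompactOperator_corner _ _ ((hG.isCompactOperator m).clm_comp X)

theorem exists_mem_nestAlgebra_norm_map_one_sub_le (hG : 𝒩.IsTriangularApproximateUnit G)
    {F : Type*} [NormedAddCommGroup F] [NormedSpace ℂ F] (L : (H →L[ℂ] H) →ₗ[ℂ] F)
    (hL : Tendsto (fun m => L (1 - G m)) atTop (𝓝 0)) {δ : ℝ} (hδ : 0 < δ) {A B : H →L[ℂ] H}
    (hA : ‖A‖ ≤ r) (hB : ‖B‖ ≤ r) (hε : 0 < ε) :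
    ∃ g ∈ 𝒩.nestAlgebra, IsCompactOperator g ∧ ‖L (1 - g)‖ ≤ δ ∧
      ‖A * g + B * (1 - g)‖ < r + ε := by
  have hconvex : Convex ℝ (((𝒩.nestAlgebra.toSubmodule ⊓
      compactOperator (RingHom.id ℂ) H H).restrictScalars ℝ : Set (H →L[ℂ] H)) ∩
      L ⁻¹' Metric.closedBall (L 1) δ) :=
    (Submodule.convex _).inter
      ((convex_closedBall (L 1) δ).linear_preimage (L.restrictScalars ℝ))
  obtain ⟨g, ⟨⟨hg, hgc⟩, hgL⟩, hgr⟩ :=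
    hG.exists_mem_norm_mul_add_mul_one_sub_lt hA hB hε hconvex (by
      filter_upwards [hL.norm.eventually_le_const (by simpa using hδ)] with m hm
      refine ⟨⟨hG.mem m, hG.isCompactOperator m⟩, ?_⟩
      rwa [mem_preimage, mem_closedBall_iff_norm', ← map_sub])
  refine ⟨g, hg, hgc, ?_, hgr⟩
  rwa [mem_preimage, mem_closedBall_iff_norm', ← map_sub] at hgL

theorem exists_perturbation (hG : 𝒩.IsTriangularApproximateUnit G)
    {Y Z : H →L[ℂ] H} (hY : Y ∈ 𝒩.nestAlgebra) (hZ : Z ∈ 𝒩.nestAlgebra)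
    (hYr : ‖Y‖ ≤ r) (hZr : ‖Z‖ ≤ r) (hε : 0 < ε) (S : Finset (I × I))
    (hS : ∀ p ∈ S, IsCompactOperator (𝒩.corner p.1 p.2 (Y - Z))) (D : Finset H) {δ : ℝ}
    (hδ : 0 < δ) :
    ∃ Z' ∈ 𝒩.nestAlgebra, ‖Z'‖ ≤ r + ε ∧ IsCompactOperator (Z' - Y) ∧
      (∀ p ∈ S, ‖𝒩.corner p.1 p.2 (Z' - Z)‖ ≤ δ) ∧ ∀ x ∈ D, ‖(Z' - Z) x‖ ≤ δ := by
  let L : (H →L[ℂ] H) →ₗ[ℂ] (S → H →L[ℂ] H) × (D → H) :=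
    (LinearMap.pi fun p : S => LinearMap.mulLeft ℂ (𝒩.corner p.1.1 p.1.2 (Y - Z))).prod
      (LinearMap.pi fun x : D => ((Y - Z).comp (ContinuousLinearMap.apply ℂ H x.1)).toLinearMap)
  have hL : Tendsto (fun m => L (1 - G m)) atTop (𝓝 0) :=
    (tendsto_pi_nhds.2 fun p : S => tendsto_zero_iff_norm_tendsto_zero.2
      (hG.tendsto_norm_mul_one_sub (hS p p.2))).prodMk_nhds (tendsto_pi_nhds.2 fun x : D => by
        rw [Pi.zero_apply, ← map_zero (Y - Z)]
        exact ((Y - Z).continuous.tendsto 0).comp (hG.tendsto_one_sub x.1))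
  obtain ⟨g, hg, hgc, hgL, hgr⟩ :=
    hG.exists_mem_nestAlgebra_norm_map_one_sub_le L hL hδ hZr hYr hε
  have hZ' : Z * g + Y * (1 - g) - Z = (Y - Z) * (1 - g) := by noncomm_ring
  refine ⟨Z * g + Y * (1 - g), add_mem (mul_mem hZ hg) (mul_mem hY (sub_mem (one_mem _) hg)),
    hgr.le, ?_, fun p hp => ?_, fun x hx => ?_⟩
  · have hY' : Z * g + Y * (1 - g) - Y = (Z - Y) * g := by noncomm_ring
    rw [hY']
    exact hgc.clm_comp (Z - Y)
  · rw [hZ', corner_mul (sub_mem (one_mem _) hg)]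
    calc _ ≤ ‖𝒩.corner p.1 p.2 (Y - Z) * (1 - g)‖ :=
          (norm_mul_le _ _).trans (mul_le_of_le_one_right (norm_nonneg _) (𝒩.norm_N_le p.2))
      _ ≤ δ := (norm_le_pi_norm (L (1 - g)).1 ⟨p, hp⟩).trans ((norm_fst_le _).trans hgL)
  · rw [hZ']
    exact (norm_le_pi_norm (L (1 - g)).2 ⟨x, hx⟩).trans ((norm_snd_le _).trans hgL)

end IsTriangularApproximateUnit

end ContinuousNest

theorem exists_seq_of_forall_exists_succ {α : Type*} {p : ℕ → α → Prop} {r : ℕ → α → α → Prop}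
    {a : α} (ha : p 0 a) (h : ∀ n a, p n a → ∃ b, p (n + 1) b ∧ r n a b) :
    ∃ u : ℕ → α, ∀ n, p n (u n) ∧ r n (u n) (u (n + 1)) := by
  have : Nonempty α := ⟨a⟩
  choose! f hf hfr using h
  let u (n : ℕ) : α := Nat.rec a f n
  have hu (n : ℕ) : p n (u n) := by
    induction n with
    | zero => exact ha
    | succ n ih => exact hf n _ ih
  exact ⟨u, fun n => ⟨hu n, hfr n _ (hu n)⟩⟩

namespace ContinuousNest

open unitInterval

variable {𝒩 : ContinuousNest H} {r ε : ℝ}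

theorem IsTriangularApproximateUnit.exists_seq_perturbation {G : ℕ → H →L[ℂ] H}
    (hG : 𝒩.IsTriangularApproximateUnit G) (hε : 0 < ε) {Y : ℕ → H →L[ℂ] H}
    (hY : ∀ n, Y n ∈ 𝒩.nestAlgebra) (hYr : ∀ n, ‖Y n‖ ≤ r) (p : ℕ → I × I)
    (hYp : ∀ n, ∀ k ≤ n, IsCompactOperator (𝒩.corner (p k).1 (p k).2 (Y (n + 1) - Y n)))
    (d : ℕ → H) :
    ∃ Z : ℕ → H →L[ℂ] H, ∀ n, Z n ∈ 𝒩.nestAlgebra ∧ ‖Z n‖ ≤ r + ε ∧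
      IsCompactOperator (Z n - Y n) ∧ ∀ k ≤ n,
        ‖𝒩.corner (p k).1 (p k).2 (Z (n + 1) - Z n)‖ ≤ (1 / 2) ^ n ∧
        ‖Z (n + 1) (d k) - Z n (d k)‖ ≤ (1 / 2) ^ n := by
  classical
  let Good (n : ℕ) (Z : H →L[ℂ] H) : Prop := Z ∈ 𝒩.nestAlgebra ∧
    ‖Z‖ ≤ r + ε * (1 - (1 / 2) ^ n) ∧ IsCompactOperator (Z - Y n)
  have hstep (n : ℕ) (Z : H →L[ℂ] H) (hZ : Good n Z) : ∃ Z', Good (n + 1) Z' ∧ ∀ k ≤ n,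
      ‖𝒩.corner (p k).1 (p k).2 (Z' - Z)‖ ≤ (1 / 2) ^ n ∧ ‖Z' (d k) - Z (d k)‖ ≤ (1 / 2) ^ n := by
    obtain ⟨hZ, hZr, hZY⟩ := hZ
    have hhalf : ((1 : ℝ) / 2) ^ n ≤ 1 := pow_le_one₀ (by norm_num) (by norm_num)
    have hcompact : ∀ q ∈ (Finset.range (n + 1)).image p,
        IsCompactOperator (𝒩.corner q.1 q.2 (Y (n + 1) - Z)) := by
      simp only [Finset.forall_mem_image, Finset.mem_range, Nat.lt_succ_iff]
      intro k hk
      rw [← sub_sub_sub_cancel_right _ _ (Y n), map_sub]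
      exact (hYp n k hk).sub (𝒩.isCompactOperator_corner _ _ hZY)
    obtain ⟨Z', hZ', hZr', hZY', hp, hd⟩ := hG.exists_perturbation (hY (n + 1)) hZ
      ((hYr (n + 1)).trans (le_add_of_nonneg_right (by nlinarith))) hZr
      (ε := ε * (1 / 2) ^ (n + 1)) (by positivity) _ hcompact ((Finset.range (n + 1)).image d)
      (δ := (1 / 2) ^ n) (by positivity)
    refine ⟨Z', ⟨hZ', hZr'.trans_eq (by ring), hZY'⟩, fun k hk => ⟨?_, ?_⟩⟩
    · exact hp _ (Finset.mem_image_of_mem p (Finset.mem_range_succ_iff.2 hk))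
    · exact hd _ (Finset.mem_image_of_mem d (Finset.mem_range_succ_iff.2 hk))
  have hzero : Good 0 (Y 0) := ⟨hY 0, by simpa using hYr 0, by
    simpa using isCompactOperator_zero⟩
  obtain ⟨Z, hZ⟩ := exists_seq_of_forall_exists_succ hzero hstep
  refine ⟨Z, fun n => ⟨(hZ n).1.1, (hZ n).1.2.1.trans ?_, (hZ n).1.2.2, (hZ n).2⟩⟩
  gcongr
  exact mul_le_of_le_one_right hε.le (sub_le_self _ (by positivity))

theorem isCompactOperator_corner_of_tendsto {Z : ℕ → H →L[ℂ] H} {W : H →L[ℂ] H} {s t : I}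
    (hZW : ∀ x, Tendsto (fun n => Z n x) atTop (𝓝 (W x)))
    (hcauchy : CauchySeq fun n => 𝒩.corner s t (Z n))
    (hcompact : ∀ᶠ n in atTop, IsCompactOperator (𝒩.corner s t (Z n))) :
    IsCompactOperator (𝒩.corner s t W) := by
  obtain ⟨L, hL⟩ := cauchySeq_tendsto_of_complete hcauchy
  have hLW : L = 𝒩.corner s t W := by
    ext x
    refine tendsto_nhds_unique (((ContinuousLinearMap.apply ℂ H x).continuous.tendsto L).comp hL) ?_
    exact ((1 - 𝒩.N s).continuous.tendsto _).comp (hZW (𝒩.N t x))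
  exact hLW ▸ isCompactOperator_of_tendsto hL hcompact

theorem exists_norm_le_forall_isCompactOperator_corner_sub [TopologicalSpace.SeparableSpace H]
    (hr : 0 < r) (hε : 0 < ε) {X : H →L[ℂ] H} (hX : X ∈ 𝒩.nestAlgebra) {S : Set (I × I)}
    (hS : S.Countable) (hXS : ∀ p ∈ S, essNorm (𝒩.corner p.1 p.2 X) < r) :
    ∃ W ∈ 𝒩.nestAlgebra, ‖W‖ ≤ r + ε ∧
      ∀ p ∈ S, IsCompactOperator (𝒩.corner p.1 p.2 (X - W)) := by
  rcases S.eq_empty_or_nonempty with rfl | hne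
  · exact ⟨0, zero_mem _, by simpa using (add_pos hr hε).le, by simp⟩
  obtain ⟨p, rfl⟩ := hS.exists_eq_range hne
  rw [forall_mem_range] at hXS
  obtain ⟨G, hG⟩ := exists_isTriangularApproximateUnit 𝒩
  have hfinite (n : ℕ) : ∃ Y ∈ 𝒩.nestAlgebra, ‖Y‖ < r ∧
      ∀ k ≤ n, IsCompactOperator (𝒩.corner (p k).1 (p k).2 (X - Y)) := by
    simpa [Nat.lt_succ_iff] using hG.exists_norm_lt_isCompactOperator_corner_sub hr hX
      ((Finset.range (n + 1)).image p) (by simpa [Finset.forall_mem_image] using fun k _ => hXS k)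
  choose Y hY hYr hXY using hfinite
  obtain ⟨Z, hZ⟩ := hG.exists_seq_perturbation hε hY (fun n => (hYr n).le) p
    (fun n k hk => by
      rw [← sub_sub_sub_cancel_left _ _ X, map_sub]
      exact (hXY n k hk).sub (hXY (n + 1) k (hk.trans n.le_succ)))
    (TopologicalSpace.denseSeq H)
  choose hZmem hZr hZY hZdiff using hZ
  obtain ⟨W, hWr, hZW⟩ := exists_tendsto_apply_of_denseRange hZr
    (TopologicalSpace.denseRange_denseSeq H) fun k =>
      cauchySeq_of_norm_sub_le_half_pow fun n hn => (hZdiff n k hn).2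
  refine ⟨W, 𝒩.mem_nestAlgebra_of_tendsto hZmem hZW, hWr, forall_mem_range.2 fun k => ?_⟩
  refine isCompactOperator_corner_of_tendsto (Z := fun n => X - Z n)
    (fun x => (hZW x).const_sub (X x)) ?_ ?_
  · refine cauchySeq_of_norm_sub_le_half_pow (k := k) fun n hn => ?_
    rw [← map_sub, sub_sub_sub_cancel_left, ← norm_neg, ← map_neg, neg_sub]
    exact (hZdiff n k hn).1
  · filter_upwards [eventually_ge_atTop k] with n hn
    rw [← sub_sub_sub_cancel_right _ _ (Y n), map_sub]
    exact (hXY n k hn).sub (𝒩.isCompactOperator_corner _ _ (hZY n))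

end ContinuousNest

/-! ### The quotient norm -/

theorem OpRefines.trans {E : Type*} [NormedAddCommGroup E] [InnerProductSpace ℂ E]
    {P Q R : Set (E →L[ℂ] E)} (hPQ : OpRefines P Q) (hQR : OpRefines Q R) : OpRefines P R := by
  intro A hA
  obtain ⟨B, hB, hAB⟩ := hPQ A hA
  obtain ⟨C, hC, hBC⟩ := hQR B hB
  exact ⟨C, hC, by simpa using hBC.add hAB⟩

namespace ContinuousNest

open unitInterval

variable {𝒩 : ContinuousNest H} {P R : Set (H →L[ℂ] H)} {O : Set (Set (H →L[ℂ] H))}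
  {X T E : H →L[ℂ] H} {r ε : ℝ}

theorem exists_isAuto_of_orderIso (𝒩 : ContinuousNest H) (φ : I ≃o I) :
    ∃ θ, 𝒩.IsAuto θ ∧ ∀ t : I, θ (𝒩.N t) = 𝒩.N (φ.symm t) := by
  let θ := Function.extend (fun t : I => 𝒩.N t) (fun t => 𝒩.N (φ.symm t)) id
  have hθ (t : I) : θ (𝒩.N t) = 𝒩.N (φ.symm t) := 𝒩.N_injective.extend_apply _ _ t
  refine ⟨θ, ⟨⟨?_, ?_, ?_⟩, fun s t hs ht hst => ?_⟩, hθ⟩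
  · rintro _ ⟨t, ht, rfl⟩
    exact ⟨_, (φ.symm ⟨t, ht⟩).2, (hθ ⟨t, ht⟩).symm⟩
  · rintro _ ⟨s, hs, rfl⟩ _ ⟨t, ht, rfl⟩ hst
    rw [hθ ⟨s, hs⟩, hθ ⟨t, ht⟩] at hst
    rw [Subtype.mk.inj (φ.symm.injective (𝒩.N_injective hst))]
  · rintro _ ⟨t, ht, rfl⟩
    exact ⟨_, ⟨_, (φ ⟨t, ht⟩).2, rfl⟩, by rw [hθ, φ.symm_apply_apply]⟩
  · rw [hθ ⟨s, hs⟩, hθ ⟨t, ht⟩]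
    exact .of_isStarProjection (𝒩.isStarProjection_N_sub_N (φ.symm.monotone hst))

theorem IsInterval.exists_unitInterval (hE : 𝒩.IsInterval E) :
    ∃ s t : I, s ≤ t ∧ E = 𝒩.N t - 𝒩.N s := by
  obtain ⟨s, t, hs, hst, ht, rfl⟩ := hE
  exact ⟨⟨s, hs, hst.trans ht⟩, ⟨t, hs.trans hst, ht⟩, hst, rfl⟩

theorem IsInterval.essNorm_compression_le (hE : 𝒩.IsInterval E) (T : H →L[ℂ] H) :
    essNorm (E * T * E) ≤ essNorm T := by
  obtain ⟨s, t, hst, rfl⟩ := hE.exists_unitInterval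
  have hnorm := (𝒩.isStarProjection_N_sub_N hst).norm_le
  exact essNorm_mul_mul_le hnorm hnorm T

/-- The interval from `N s` to `N t` lies below a member of the family `P` of intervals. It is
stated through the endpoints so that order isomorphisms of `[0, 1]` act on it. -/
def Dominates (𝒩 : ContinuousNest H) (P : Set (H →L[ℂ] H)) (s t : I) : Prop :=
  ∃ a b : I, a ≤ s ∧ t ≤ b ∧ a ≤ b ∧ 𝒩.N b - 𝒩.N a ∈ P

theorem isHereditary_dominates (𝒩 : ContinuousNest H) (P : Set (H →L[ℂ] H)) :
    IsHereditary (𝒩.Dominates P) :=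
  fun _ _ _ _ hs ht ⟨a, b, ha, hb, hab, hP⟩ => ⟨a, b, ha.trans hs, ht.trans hb, hab, hP⟩

theorem dominates_of_opRefines (hP : 𝒩.IsIntervalFamily P) (hRP : OpRefines R P) {s t : I}
    (hst : s < t) (hR : 𝒩.N t - 𝒩.N s ∈ R) : 𝒩.Dominates P s t := by
  obtain ⟨F, hF, hpos⟩ := hRP _ hR
  obtain ⟨a, b, hab, rfl⟩ := (hP F hF).exists_unitInterval
  obtain ⟨ha, hb⟩ := 𝒩.le_and_le_of_isPositive hst hab hpos
  exact ⟨a, b, ha, hb, hab, hF⟩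

theorem Dominates.of_autoImage {θ : (H →L[ℂ] H) → H →L[ℂ] H} {φ : I ≃o I}
    (hθ : ∀ t : I, θ (𝒩.N t) = 𝒩.N (φ.symm t)) {s t : I} (hst : s < t)
    (h : 𝒩.Dominates (𝒩.autoImage θ P) s t) : 𝒩.Dominates P (φ s) (φ t) := by
  obtain ⟨a, b, ha, hb, -, c, d, hc, hcd, hd, hP, heq⟩ := h
  lift c to I using ⟨hc, hcd.trans hd⟩
  lift d to I using ⟨hc.trans hcd, hd⟩
  rw [hθ, hθ] at heq
  obtain ⟨hca, hbd⟩ := 𝒩.le_and_le_of_isPositive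
    ((ha.trans_lt hst).trans_le hb) (φ.symm.monotone hcd) (by
      rw [heq, sub_self]
      exact ContinuousLinearMap.isPositive_zero)
  exact ⟨c, d, φ.symm_apply_le.1 (hca.trans ha), φ.le_symm_apply.1 (hb.trans hbd), hcd, hP⟩

theorem Dominates.essNorm_corner_lt (hX : X ∈ 𝒩.nestAlgebra)
    (hP : ∀ E ∈ P, essNorm (E * X * E) < r) {s t : I} (h : 𝒩.Dominates P s t) :
    essNorm (𝒩.corner s t X) < r := by
  obtain ⟨a, b, ha, hb, hab, hE⟩ := h
  rw [← corner_corner ha hb X, ← compression_eq_corner hab hX]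
  exact (essNorm_mul_mul_le (𝒩.norm_one_sub_N_le s) (𝒩.norm_N_le t) _).trans_lt (hP _ hE)

theorem IsStableNet.exists_countable_dominates (hO : 𝒩.IsStableNet O) (hP : P ∈ O) :
    ∃ S : Set (I × I), S.Countable ∧ (∀ p ∈ S, 𝒩.Dominates P p.1 p.2) ∧
      ∃ R ∈ O, ∀ s t : I, s < t → 𝒩.N t - 𝒩.N s ∈ R → ∃ p ∈ S, p.1 ≤ s ∧ t ≤ p.2 := by
  obtain ⟨⟨hfamily, hdirected⟩, hstable⟩ := hO
  obtain ⟨φ₁, φ₂, C, hC, hdom⟩ := (𝒩.isHereditary_dominates P).exists_orderIso_dominating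
  obtain ⟨θ₁, hauto₁, hθ₁⟩ := 𝒩.exists_isAuto_of_orderIso φ₁
  obtain ⟨θ₂, hauto₂, hθ₂⟩ := 𝒩.exists_isAuto_of_orderIso φ₂
  have hP₁ := hstable θ₁ hauto₁ P hP
  have hP₂ := hstable θ₂ hauto₂ P hP
  obtain ⟨Q, hQ, hQ₁, hQ₂⟩ := hdirected _ hP₁ _ hP₂
  obtain ⟨R, hR, hRP, hRQ⟩ := hdirected P hP Q hQ
  refine ⟨{p ∈ C ×ˢ C | 𝒩.Dominates P p.1 p.2}, (hC.prod hC).mono (sep_subset _ _),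
    fun p hp => hp.2, R, hR, fun s t hst hE => ?_⟩
  obtain ⟨s', hs', t', ht', hD, hs, ht⟩ := hdom s t hst
    (dominates_of_opRefines (hfamily P hP) hRP hst hE)
    ((dominates_of_opRefines (hfamily _ hP₁) (hRQ.trans hQ₁) hst hE).of_autoImage hθ₁ hst)
    ((dominates_of_opRefines (hfamily _ hP₂) (hRQ.trans hQ₂) hst hE).of_autoImage hθ₂ hst)
  exact ⟨(s', t'), ⟨⟨hs', ht'⟩, hD⟩, hs, ht⟩

theorem IsStableNet.exists_norm_le_sub_mem_kernel [TopologicalSpace.SeparableSpace H]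
    (hO : 𝒩.IsStableNet O) (hX : X ∈ 𝒩.nestAlgebra) (hP : P ∈ O) (hr : 0 < r) (hε : 0 < ε)
    (hPr : ∀ E ∈ P, essNorm (E * X * E) < r) : ∃ W, ‖W‖ ≤ r + ε ∧ X - W ∈ 𝒩.kernel O := by
  obtain ⟨S, hS, hSP, R, hR, hRS⟩ := hO.exists_countable_dominates hP
  obtain ⟨W, hW, hWr, hXW⟩ := exists_norm_le_forall_isCompactOperator_corner_sub hr hε hX hS
    fun p hp => (hSP p hp).essNorm_corner_lt hX hPr
  have hXW_mem : X - W ∈ 𝒩.nestAlgebra := sub_mem hX hW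
  refine ⟨W, hWr, hXW_mem, fun η hη => ⟨R, hR, fun E hE => ?_⟩⟩
  suffices IsCompactOperator (E * (X - W) * E) by rwa [essNorm_eq_zero this]
  obtain ⟨s, t, hst, rfl⟩ := (hO.1.1 R hR E hE).exists_unitInterval
  rcases hst.eq_or_lt with rfl | hlt
  · simpa using isCompactOperator_zero
  · obtain ⟨p, hp, hps, hpt⟩ := hRS s t hlt hE
    rw [compression_eq_corner hst hXW_mem, ← corner_corner hps hpt]
    exact 𝒩.isCompactOperator_corner s t (hXW p hp)

theorem kernel_empty (𝒩 : ContinuousNest H) : 𝒩.kernel ∅ = ∅ :=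
  eq_empty_of_forall_notMem fun _ hT => by simpa using hT.2 1 one_pos

theorem zero_mem_kernel (𝒩 : ContinuousNest H) (hO : O.Nonempty) : 0 ∈ 𝒩.kernel O :=
  ⟨zero_mem 𝒩.nestAlgebra, fun ε hε => hO.imp fun P hP => ⟨hP, fun E _ => by
    simpa [essNorm_zero] using hε⟩⟩

theorem IsIntervalFamily.bddAbove_essNorm_compression (hP : 𝒩.IsIntervalFamily P)
    (X : H →L[ℂ] H) : BddAbove (range fun E : P => essNorm (E.1 * X * E.1)) :=
  ⟨essNorm X, forall_mem_range.2 fun E => (hP E E.2).essNorm_compression_le X⟩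

theorem iSup_essNorm_compression_nonneg (P : Set (H →L[ℂ] H)) (X : H →L[ℂ] H) :
    0 ≤ ⨆ E : P, essNorm (E.1 * X * E.1) :=
  Real.iSup_nonneg fun _ => essNorm_nonneg _

theorem IsNet.iInf_iSup_essNorm_le_norm_sub (hO : 𝒩.IsNet O) (X : H →L[ℂ] H)
    (hT : T ∈ 𝒩.kernel O) : ⨅ P : O, ⨆ E : P.1, essNorm (E.1 * X * E.1) ≤ ‖X - T‖ := by
  refine le_of_forall_pos_le_add fun ε hε => ?_
  obtain ⟨P, hP, hPT⟩ := hT.2 ε hε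
  refine ciInf_le_of_le ⟨0, forall_mem_range.2 fun Q => iSup_essNorm_compression_nonneg Q.1 X⟩
    ⟨P, hP⟩ (Real.iSup_le (fun E => ?_) (by positivity))
  calc essNorm (E.1 * X * E.1) = essNorm (E.1 * (X - T) * E.1 + E.1 * T * E.1) := by
        rw [← add_mul, ← mul_add, sub_add_cancel]
    _ ≤ ‖X - T‖ + ε := (essNorm_add_le _ _).trans (add_le_add
      (((hO.1 P hP E E.2).essNorm_compression_le _).trans (essNorm_le_norm _)) (hPT E E.2).le)

theorem IsStableNet.infDist_kernel_le [TopologicalSpace.SeparableSpace H]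
    (hO : 𝒩.IsStableNet O) (hX : X ∈ 𝒩.nestAlgebra) (hne : O.Nonempty) :
    Metric.infDist X (𝒩.kernel O) ≤ ⨅ P : O, ⨆ E : P.1, essNorm (E.1 * X * E.1) := by
  have := hne.to_subtype
  refine le_ciInf fun P => le_of_forall_pos_le_add fun ε hε => ?_
  obtain ⟨W, hW, hXW⟩ := hO.exists_norm_le_sub_mem_kernel hX P.2
    (r := (⨆ E : P.1, essNorm (E.1 * X * E.1)) + ε / 2)
    (add_pos_of_nonneg_of_pos (iSup_essNorm_compression_nonneg P.1 X) (half_pos hε)) (half_pos hε)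
    fun E hE => lt_add_of_le_of_pos
      (le_ciSup ((hO.1.1 P P.2).bddAbove_essNorm_compression X) ⟨E, hE⟩) (half_pos hε)
  calc Metric.infDist X (𝒩.kernel O) ≤ dist X (X - W) := Metric.infDist_le_dist_of_mem hXW
    _ = ‖W‖ := by rw [dist_eq_norm, sub_sub_cancel]
    _ ≤ _ := hW.trans_eq (by ring)

end ContinuousNest

/-- Quotient norm formula: the distance from `X ∈ Alg 𝒩` to the kernel of a
stable net `O` equals the limit (= infimum, by antitonicity under refinement) over `P ∈ O`
of `sup_{E ∈ P} ‖EXE‖ₑ`. -/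
theorem stmt2 {H : Type*} [NormedAddCommGroup H] [InnerProductSpace ℂ H] [CompleteSpace H]
    [TopologicalSpace.SeparableSpace H] (hH : ¬FiniteDimensional ℂ H)
    (𝒩 : ContinuousNest H) (O : Set (Set (H →L[ℂ] H))) (hO : 𝒩.IsStableNet O)
    (X : H →L[ℂ] H) (hX : X ∈ 𝒩.alg) :
    Metric.infDist X (𝒩.kernel O) =
      ⨅ P : O, ⨆ E : P.1, essNorm (E.1 * X * E.1) := by
  rcases O.eq_empty_or_nonempty with rfl | hne
  · rw [𝒩.kernel_empty, Metric.infDist_empty, Real.iInf_of_isEmpty]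
  · refine le_antisymm (hO.infDist_kernel_le hX hne) ?_
    refine (Metric.le_infDist ⟨0, 𝒩.zero_mem_kernel hne⟩).2 fun T hT => ?_
    rw [dist_eq_norm]
    exact hO.1.iInf_iSup_essNorm_le_norm_sub X hT
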